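/- Let {X_n, n≥1} satisfy the φ-mixing condition (1) with rate r>2 and constant C>0, and the moment condition (2) with exponent α ∈ (0,1) and ν_α = sup_n E|X_n|^{1+α}. Let c>0, δ ∈ (0,1), p = 2 log(1/δ), φ = Σ_{m=1}^∞ φ(m)^{1/2}, a_1 = √(3cν_α(1+4φ)), β = (αr+1)/((1+α)(1+r)), λ = (r−1)/((1+r)(1+α)), b_n = (n/p)^λ, A = e^{1/4 + √e·C·4^r}, and Y_k = X_k·1(|X_k|≤b_n) − E(X_k·1(|X_k|≤b_n)). Set δ_n = a_1 (p/n)^β. Then there exists n_0 (depending on δ) such that for all n ≥ n_0, P( Σ_{k=1}^n Y_k ≥ n δ_n ) ≤ A δ^c and P( Σ_{k=1}^n Y_k ≤ −n δ_n ) ≤ A δ^c; in particular P( |Σ_{k=1}^n Y_k| ≥ n δ_n ) ≤ 2A δ^c. -/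

import Mathlib

open MeasureTheory ProbabilityTheory Finset

noncomputable def phiCoef {Ω : Type*} [MeasurableSpace Ω] (μ : Measure Ω)
    (X : ℕ → Ω → ℝ) (m : ℕ) : ℝ :=
  sSup {x : ℝ | ∃ k : ℕ, 1 ≤ k ∧ ∃ A B : Set Ω,
    MeasurableSet[⨆ i ∈ Set.Icc 1 k, MeasurableSpace.comap (X i) inferInstance] A ∧
    MeasurableSet[⨆ i ∈ Set.Ici (k + m), MeasurableSpace.comap (X i) inferInstance] B ∧
    0 < μ A ∧
    x = |(μ (B ∩ A)).toReal / (μ A).toReal - (μ B).toReal|}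

noncomputable def phiSum {Ω : Type*} [MeasurableSpace Ω] (μ : Measure Ω)
    (X : ℕ → Ω → ℝ) : ℝ :=
  ∑' m : ℕ, Real.sqrt (phiCoef μ X (m + 1))

noncomputable def tailPart {Ω : Type*} [MeasurableSpace Ω] (μ : Measure Ω)
    (X : ℕ → Ω → ℝ) (b : ℝ) (k : ℕ) (ω : Ω) : ℝ :=
  (if b < |X k ω| then X k ω else 0) - ∫ ω', (if b < |X k ω'| then X k ω' else 0) ∂μ

noncomputable def mainPart {Ω : Type*} [MeasurableSpace Ω] (μ : Measure Ω)
    (X : ℕ → Ω → ℝ) (b : ℝ) (k : ℕ) (ω : Ω) : ℝ :=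
  (if |X k ω| ≤ b then X k ω else 0) - ∫ ω', (if |X k ω'| ≤ b then X k ω' else 0) ∂μ

/-!
Write `t Y₁, …, t Yₙ` for the main parts scaled by the parameter `t` of the Chernoff bound; they are
bounded by a multiple of `n ^ (-1 / (1 + r))`. Their sum is cut into blocks whose length is slightly
more than `n ^ (1 / (1 + r))`. On the event that all block sums are at most `1 / 2` in absolute
value, the inequality `2 e^(P+Q) ≤ e^(2P) + e^(2Q)` separates the even from the odd blocks, and
φ-mixing bounds the expectation of a product of truncated exponentials of separated blocks.
A block sum exceeds `1 / 2` only rarely: such a block contains two large parts separated by a piece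
slightly shorter than `n ^ (1 / (1 + r))`, which is too short to matter, and φ-mixing makes the
two parts almost independent, so that the Chebyshev bound gets squared. In the limit all error terms
vanish, and there remains `exp (-3cp/2 + 5/4 · 3cp/4) = exp (-9cp/16) < exp (-cp/2) = δ ^ c`.
-/

open Filter Topology

section Covariance

variable {Ω : Type*} {m₁ m₂ mΩ : MeasurableSpace Ω} {μ : Measure Ω} {φ : ℝ}

/-- The uniform mixing condition between two σ-algebras, with the φ-mixing inequality
`|P(B | A) - P(B)| ≤ φ` multiplied by `P(A)` so that it makes sense for null sets `A`. -/
def IsPhiMixing (μ : Measure[mΩ] Ω) (m₁ m₂ : MeasurableSpace Ω) (φ : ℝ) : Prop :=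
  ∀ ⦃A B : Set Ω⦄, MeasurableSet[m₁] A → MeasurableSet[m₂] B →
    |μ.real (A ∩ B) - μ.real A * μ.real B| ≤ φ * μ.real A

lemma IsPhiMixing.nonneg [IsProbabilityMeasure μ] (h : IsPhiMixing μ m₁ m₂ φ) : 0 ≤ φ := by
  simpa using h MeasurableSet.univ MeasurableSet.univ

lemma IsPhiMixing.mono {m₁' m₂' : MeasurableSpace Ω} (h : IsPhiMixing μ m₁ m₂ φ)
    (h₁ : m₁' ≤ m₁) (h₂ : m₂' ≤ m₂) : IsPhiMixing μ m₁' m₂' φ :=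
  fun _ _ hA hB => h (h₁ _ hA) (h₂ _ hB)

lemma isPhiMixing_bot_left [IsProbabilityMeasure μ] (hφ : 0 ≤ φ) : IsPhiMixing μ ⊥ m₂ φ := by
  intro A B hA _
  rcases MeasurableSpace.measurableSet_bot_iff.1 hA with rfl | rfl <;> simp [hφ]

lemma sum_abs_le_two_mul {ι : Type*} {s : Finset ι} {q : ι → ℝ} {c : ℝ}
    (h : ∀ T ⊆ s, |∑ i ∈ T, q i| ≤ c) : ∑ i ∈ s, |q i| ≤ 2 * c := by
  have hpos := (le_abs_self _).trans (h _ (filter_subset (fun i => 0 ≤ q i) s))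
  have hneg := (neg_le_abs _).trans (h _ (filter_subset (fun i => ¬0 ≤ q i) s))
  have hsplit : ∑ i ∈ s, |q i| =
      ∑ i ∈ s with 0 ≤ q i, q i + -∑ i ∈ s with ¬0 ≤ q i, q i := by
    rw [← sum_filter_add_sum_filter_not s (fun i => 0 ≤ q i), ← sum_neg_distrib]
    congr 1 <;> refine sum_congr rfl fun i hi => ?_
    · exact abs_of_nonneg (mem_filter.1 hi).2
    · exact abs_of_neg (not_le.1 (mem_filter.1 hi).2)
  linarith

-- Schur's test: Cauchy–Schwarz with the weights `|q x y|`.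
lemma abs_sum_sum_mul_le_sqrt_mul_sqrt {ι κ : Type*} {s : Finset ι} {t : Finset κ}
    {q : ι → κ → ℝ} {a : ι → ℝ} {b : κ → ℝ} {R S : ℝ}
    (hrow : ∀ x ∈ s, ∑ y ∈ t, |q x y| ≤ R * a x) (hcol : ∀ y ∈ t, ∑ x ∈ s, |q x y| ≤ S * b y)
    (u : ι → ℝ) (v : κ → ℝ) :
    |∑ x ∈ s, ∑ y ∈ t, q x y * (u x * v y)| ≤
      √(R * ∑ x ∈ s, a x * u x ^ 2) * √(S * ∑ y ∈ t, b y * v y ^ 2) := by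
  have hu : ∑ p ∈ s ×ˢ t, |q p.1 p.2| * u p.1 ^ 2 ≤ R * ∑ x ∈ s, a x * u x ^ 2 := by
    rw [sum_product, mul_sum]
    refine sum_le_sum fun x hx => ?_
    simp only [← sum_mul, ← mul_assoc]
    gcongr
    exact hrow x hx
  have hv : ∑ p ∈ s ×ˢ t, |q p.1 p.2| * v p.2 ^ 2 ≤ S * ∑ y ∈ t, b y * v y ^ 2 := by
    rw [sum_product_right, mul_sum]
    refine sum_le_sum fun y hy => ?_
    simp only [← sum_mul, ← mul_assoc]
    gcongr
    exact hcol y hy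
  calc |∑ x ∈ s, ∑ y ∈ t, q x y * (u x * v y)|
      = |∑ p ∈ s ×ˢ t, q p.1 p.2 * (u p.1 * v p.2)| := by rw [sum_product]
    _ ≤ ∑ p ∈ s ×ˢ t, |q p.1 p.2 * (u p.1 * v p.2)| := abs_sum_le_sum_abs _ _
    _ = ∑ p ∈ s ×ˢ t, √(|q p.1 p.2| * u p.1 ^ 2) * √(|q p.1 p.2| * v p.2 ^ 2) := by
        refine sum_congr rfl fun p _ => ?_
        rw [← Real.sqrt_mul (by positivity), ← Real.sqrt_sq_eq_abs]
        congr 1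
        rw [mul_mul_mul_comm, abs_mul_abs_self]
        ring
    _ ≤ √(∑ p ∈ s ×ˢ t, |q p.1 p.2| * u p.1 ^ 2) * √(∑ p ∈ s ×ˢ t, |q p.1 p.2| * v p.2 ^ 2) :=
        Real.sum_sqrt_mul_sqrt_le _ (fun _ => by positivity) fun _ => by positivity
    _ ≤ _ := by gcongr

lemma integral_comp_eq_sum_of_finite_range [IsFiniteMeasure μ] {E : Type*} [MeasurableSpace E]
    [MeasurableSingletonClass E] {h : Ω → E} (hm : Measurable h) {s : Finset E}
    (hs : ∀ ω, h ω ∈ s) (F : E → ℝ) :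
    ∫ ω, F (h ω) ∂μ = ∑ x ∈ s, μ.real (h ⁻¹' {x}) * F x := by
  classical
  have hF : ∀ ω, F (h ω) = ∑ x ∈ s, (h ⁻¹' {x}).indicator (fun _ => F x) ω := fun ω => by
    simp [Set.indicator_apply, hs ω]
  have hmeas (x : E) : MeasurableSet (h ⁻¹' {x}) := hm (measurableSet_singleton x)
  simp_rw [hF]
  rw [integral_finsetSum _ fun x _ => (integrable_const _).indicator (hmeas x)]
  exact sum_congr rfl fun x _ => integral_indicator_const _ (hmeas x)

lemma sum_measureReal_inter_preimage_singleton [IsFiniteMeasure μ] {g : Ω → ℝ}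
    (hg : Measurable g) {A : Set Ω} (T : Finset ℝ) :
    ∑ y ∈ T, μ.real (A ∩ g ⁻¹' {y}) = μ.real (A ∩ g ⁻¹' T) := by
  have hm (U : Set ℝ) (hU : MeasurableSet U) : (μ.restrict A).real (g ⁻¹' U) =
      μ.real (A ∩ g ⁻¹' U) := by
    rw [measureReal_restrict_apply (hg hU), Set.inter_comm]
  rw [← hm _ T.measurableSet, ← sum_measureReal_preimage_singleton T
    fun y _ => hg (measurableSet_singleton y)]
  exact sum_congr rfl fun y _ => (hm _ (measurableSet_singleton y)).symm

lemma integral_mul_sub_mul_integral_eq_sum [IsProbabilityMeasure μ] {f g : Ω → ℝ}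
    (hf : Measurable f) (hg : Measurable g) {s t : Finset ℝ} (hs : ∀ ω, f ω ∈ s)
    (ht : ∀ ω, g ω ∈ t) :
    ∫ ω, f ω * g ω ∂μ - (∫ ω, f ω ∂μ) * ∫ ω, g ω ∂μ =
      ∑ x ∈ s, ∑ y ∈ t,
        (μ.real (f ⁻¹' {x} ∩ g ⁻¹' {y}) - μ.real (f ⁻¹' {x}) * μ.real (g ⁻¹' {y})) * (x * y) := by
  have hfg := integral_comp_eq_sum_of_finite_range (μ := μ) (hf.prodMk hg) (s := s ×ˢ t)
    (fun ω => mk_mem_product (hs ω) (ht ω)) fun p => p.1 * p.2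
  simp only at hfg
  rw [hfg, integral_comp_eq_sum_of_finite_range hf hs fun x => x,
    integral_comp_eq_sum_of_finite_range hg ht fun y => y, sum_mul_sum, sum_product,
    ← sum_sub_distrib]
  refine sum_congr rfl fun x _ => ?_
  rw [← sum_sub_distrib]
  refine sum_congr rfl fun y _ => ?_
  rw [← Set.singleton_prod_singleton, Set.mk_preimage_prod]
  ring

lemma IsPhiMixing.sum_abs_sub_mul_le [IsProbabilityMeasure μ] (h : IsPhiMixing μ m₁ m₂ φ)
    (h₂ : m₂ ≤ mΩ) {g : Ω → ℝ} (hg : Measurable[m₂] g) (t : Finset ℝ) {A : Set Ω}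
    (hA : MeasurableSet[m₁] A) :
    ∑ y ∈ t, |μ.real (A ∩ g ⁻¹' {y}) - μ.real A * μ.real (g ⁻¹' {y})| ≤ 2 * φ * μ.real A := by
  have hg' := hg.mono h₂ le_rfl
  rw [mul_assoc]
  refine sum_abs_le_two_mul fun T _ => ?_
  rw [sum_sub_distrib, ← mul_sum, sum_measureReal_inter_preimage_singleton hg',
    sum_measureReal_preimage_singleton T fun y _ => hg' (measurableSet_singleton y)]
  exact h hA (hg T.measurableSet)

lemma sum_abs_sub_mul_le_two_mul [IsProbabilityMeasure μ] {f : Ω → ℝ} (hf : Measurable f)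
    (s : Finset ℝ) (B : Set Ω) :
    ∑ x ∈ s, |μ.real (f ⁻¹' {x} ∩ B) - μ.real (f ⁻¹' {x}) * μ.real B| ≤ 2 * μ.real B := by
  have hjoint : ∑ x ∈ s, μ.real (f ⁻¹' {x} ∩ B) ≤ μ.real B := by
    simp_rw [Set.inter_comm _ B]
    rw [sum_measureReal_inter_preimage_singleton hf]
    exact measureReal_mono Set.inter_subset_left
  have hprod : ∑ x ∈ s, μ.real (f ⁻¹' {x}) * μ.real B ≤ μ.real B := by
    rw [← sum_mul, sum_measureReal_preimage_singleton s fun x _ => hf (measurableSet_singleton x)]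
    exact mul_le_of_le_one_left measureReal_nonneg measureReal_le_one
  calc _ ≤ ∑ x ∈ s, (μ.real (f ⁻¹' {x} ∩ B) + μ.real (f ⁻¹' {x}) * μ.real B) :=
        sum_le_sum fun x _ => (abs_sub _ _).trans_eq
          (congr_arg₂ _ (abs_of_nonneg measureReal_nonneg) (abs_of_nonneg (by positivity)))
    _ ≤ 2 * μ.real B := by rw [sum_add_distrib]; linarith

lemma IsPhiMixing.abs_cov_le_of_finite_range [IsProbabilityMeasure μ]
    (h : IsPhiMixing μ m₁ m₂ φ) (h₁ : m₁ ≤ mΩ) (h₂ : m₂ ≤ mΩ) {f g : Ω → ℝ}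
    (hf : Measurable[m₁] f) (hg : Measurable[m₂] g) {s t : Finset ℝ} (hs : ∀ ω, f ω ∈ s)
    (ht : ∀ ω, g ω ∈ t) :
    |∫ ω, f ω * g ω ∂μ - (∫ ω, f ω ∂μ) * ∫ ω, g ω ∂μ| ≤
      2 * √φ * √(∫ ω, f ω ^ 2 ∂μ) * √(∫ ω, g ω ^ 2 ∂μ) := by
  have hf' := hf.mono h₁ le_rfl
  have hg' := hg.mono h₂ le_rfl
  rw [integral_mul_sub_mul_integral_eq_sum hf' hg' hs ht,
    integral_comp_eq_sum_of_finite_range hf' hs (· ^ 2),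
    integral_comp_eq_sum_of_finite_range hg' ht (· ^ 2)]
  refine (abs_sum_sum_mul_le_sqrt_mul_sqrt
    (fun x _ => h.sum_abs_sub_mul_le h₂ hg t (hf (measurableSet_singleton x)))
    (fun y _ => sum_abs_sub_mul_le_two_mul hf' s (g ⁻¹' {y})) _ _).trans_eq ?_
  rw [Real.sqrt_mul (by have := h.nonneg; positivity), Real.sqrt_mul zero_le_two,
    Real.sqrt_mul zero_le_two]
  linear_combination √φ * √(∑ x ∈ s, μ.real (f ⁻¹' {x}) * x ^ 2) *
    √(∑ y ∈ t, μ.real (g ⁻¹' {y}) * y ^ 2) * Real.mul_self_sqrt zero_le_two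

lemma IsPhiMixing.abs_cov_le_of_finite_range_of_abs_le [IsProbabilityMeasure μ]
    (h : IsPhiMixing μ m₁ m₂ φ) (h₁ : m₁ ≤ mΩ) (h₂ : m₂ ≤ mΩ) {f g : Ω → ℝ}
    (hf : Measurable[m₁] f) (hg : Measurable[m₂] g) {s t : Finset ℝ} (hs : ∀ ω, f ω ∈ s)
    (ht : ∀ ω, g ω ∈ t) {K : ℝ} (hK : ∀ y ∈ t, |y| ≤ K) :
    |∫ ω, f ω * g ω ∂μ - (∫ ω, f ω ∂μ) * ∫ ω, g ω ∂μ| ≤ 2 * φ * K * ∫ ω, |f ω| ∂μ := by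
  have hf' := hf.mono h₁ le_rfl
  obtain ⟨ω₀⟩ := nonempty_of_isProbabilityMeasure μ
  have hK₀ : 0 ≤ K := (abs_nonneg _).trans (hK _ (ht ω₀))
  rw [integral_mul_sub_mul_integral_eq_sum hf' (hg.mono h₂ le_rfl) hs ht,
    integral_comp_eq_sum_of_finite_range hf' hs (|·|), mul_sum]
  refine (abs_sum_le_sum_abs _ _).trans (sum_le_sum fun x _ => ?_)
  calc _ ≤ ∑ y ∈ t, |μ.real (f ⁻¹' {x} ∩ g ⁻¹' {y}) - μ.real (f ⁻¹' {x}) * μ.real (g ⁻¹' {y})| *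
        (|x| * K) := by
        refine (abs_sum_le_sum_abs _ _).trans (sum_le_sum fun y hy => ?_)
        rw [abs_mul, abs_mul]
        gcongr
        exact hK y hy
    _ ≤ 2 * φ * μ.real (f ⁻¹' {x}) * (|x| * K) := by
        rw [← sum_mul]
        gcongr
        exact h.sum_abs_sub_mul_le h₂ hg t (hf (measurableSet_singleton x))
    _ = 2 * φ * K * (μ.real (f ⁻¹' {x}) * |x|) := by ring

lemma exists_finite_range_approx {m : MeasurableSpace Ω} {f : Ω → ℝ} (hf : Measurable f)
    {s : Set ℝ} (h₀ : 0 ∈ s) (hs : ∀ ω, f ω ∈ s) :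
    ∃ F : ℕ → Ω → ℝ, (∀ n, Measurable (F n)) ∧ (∀ n, ∃ t : Finset ℝ, ∀ ω, F n ω ∈ t) ∧
      (∀ n ω, F n ω ∈ s) ∧ (∀ n ω, |F n ω| ≤ 2 * |f ω|) ∧
      ∀ ω, Tendsto (fun n => F n ω) atTop (𝓝 (f ω)) := by
  let F := SimpleFunc.approxOn f hf s 0 h₀
  refine ⟨fun n => F n, fun n => (F n).measurable, fun n => ⟨(F n).range, (F n).mem_range_self⟩,
    fun n => SimpleFunc.approxOn_mem hf h₀ n, fun n ω => ?_,
    fun ω => SimpleFunc.tendsto_approxOn hf h₀ (subset_closure (hs ω))⟩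
  simpa [two_mul] using SimpleFunc.norm_approxOn_zero_le hf h₀ ω n

lemma tendsto_integral_of_abs_le_const_mul {F : ℕ → Ω → ℝ} {f : Ω → ℝ} (c : ℝ)
    (hF : ∀ n, Measurable (F n)) (hf : Integrable f μ) (hle : ∀ n ω, |F n ω| ≤ c * |f ω|)
    (hlim : ∀ ω, Tendsto (fun n => F n ω) atTop (𝓝 (f ω))) :
    Tendsto (fun n => ∫ ω, F n ω ∂μ) atTop (𝓝 (∫ ω, f ω ∂μ)) :=
  tendsto_integral_of_dominated_convergence (fun ω => c * |f ω|)
    (fun n => (hF n).aestronglyMeasurable) (hf.abs.const_mul c)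
    (fun n => .of_forall (hle n)) (.of_forall hlim)

lemma IsPhiMixing.abs_cov_le [IsProbabilityMeasure μ] (h : IsPhiMixing μ m₁ m₂ φ) (h₁ : m₁ ≤ mΩ)
    (h₂ : m₂ ≤ mΩ) {f g : Ω → ℝ} (hf : Measurable[m₁] f) (hg : Measurable[m₂] g)
    (hf₂ : MemLp f 2 μ) (hg₂ : MemLp g 2 μ) :
    |∫ ω, f ω * g ω ∂μ - (∫ ω, f ω ∂μ) * ∫ ω, g ω ∂μ| ≤
      2 * √φ * √(∫ ω, f ω ^ 2 ∂μ) * √(∫ ω, g ω ^ 2 ∂μ) := by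
  obtain ⟨F, hF, hFr, -, hFle, hFlim⟩ := exists_finite_range_approx hf (Set.mem_univ 0) (by simp)
  obtain ⟨G, hG, hGr, -, hGle, hGlim⟩ := exists_finite_range_approx hg (Set.mem_univ 0) (by simp)
  have hF' n := (hF n).mono h₁ le_rfl
  have hG' n := (hG n).mono h₂ le_rfl
  have sq_le {x y : ℝ} (hxy : |x| ≤ 2 * |y|) : |x ^ 2| ≤ 4 * |y ^ 2| := by
    rw [abs_pow, abs_pow]
    exact (pow_le_pow_left₀ (abs_nonneg x) hxy 2).trans_eq (by ring)
  have limF := tendsto_integral_of_abs_le_const_mul 2 hF' (hf₂.integrable one_le_two) hFle hFlim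
  have limG := tendsto_integral_of_abs_le_const_mul 2 hG' (hg₂.integrable one_le_two) hGle hGlim
  have limFG := tendsto_integral_of_abs_le_const_mul 4 (fun n => (hF' n).mul (hG' n))
    (hf₂.integrable_mul hg₂) (fun n ω => by
      rw [Pi.mul_apply, Pi.mul_apply, abs_mul, abs_mul]
      exact (mul_le_mul (hFle n ω) (hGle n ω) (abs_nonneg _) (by positivity)).trans_eq (by ring))
    fun ω => (hFlim ω).mul (hGlim ω)
  have limF₂ := tendsto_integral_of_abs_le_const_mul 4 (fun n => (hF' n).pow_const 2)
    hf₂.integrable_sq (fun n ω => sq_le (hFle n ω)) fun ω => (hFlim ω).pow 2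
  have limG₂ := tendsto_integral_of_abs_le_const_mul 4 (fun n => (hG' n).pow_const 2)
    hg₂.integrable_sq (fun n ω => sq_le (hGle n ω)) fun ω => (hGlim ω).pow 2
  refine le_of_tendsto_of_tendsto' (limFG.sub (limF.mul limG)).abs
    ((limF₂.sqrt.const_mul _).mul limG₂.sqrt) fun n => ?_
  obtain ⟨s, hs⟩ := hFr n
  obtain ⟨t, ht⟩ := hGr n
  exact h.abs_cov_le_of_finite_range h₁ h₂ (hF n) (hG n) hs ht

lemma IsPhiMixing.abs_cov_le_of_abs_le [IsProbabilityMeasure μ] (h : IsPhiMixing μ m₁ m₂ φ)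
    (h₁ : m₁ ≤ mΩ) (h₂ : m₂ ≤ mΩ) {f g : Ω → ℝ} (hf : Measurable[m₁] f) (hg : Measurable[m₂] g)
    (hfi : Integrable f μ) {K : ℝ} (hK : ∀ ω, |g ω| ≤ K) :
    |∫ ω, f ω * g ω ∂μ - (∫ ω, f ω ∂μ) * ∫ ω, g ω ∂μ| ≤ 2 * φ * K * ∫ ω, |f ω| ∂μ := by
  obtain ⟨ω₀⟩ := nonempty_of_isProbabilityMeasure μ
  have hK₀ : 0 ≤ K := (abs_nonneg _).trans (hK ω₀)
  obtain ⟨F, hF, hFr, -, hFle, hFlim⟩ := exists_finite_range_approx hf (Set.mem_univ 0) (by simp)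
  obtain ⟨G, hG, hGr, hGK, hGle, hGlim⟩ := exists_finite_range_approx hg
    (s := Set.Icc (-K) K) (by simpa using hK₀) fun ω => abs_le.1 (hK ω)
  have hF' n := (hF n).mono h₁ le_rfl
  have hG' n := (hG n).mono h₂ le_rfl
  have hgi : Integrable g μ :=
    .of_bound (hg.mono h₂ le_rfl).aestronglyMeasurable K (.of_forall hK)
  have limF := tendsto_integral_of_abs_le_const_mul 2 hF' hfi hFle hFlim
  have limG := tendsto_integral_of_abs_le_const_mul 2 hG' hgi hGle hGlim
  have limFG := tendsto_integral_of_abs_le_const_mul 4 (fun n => (hF' n).mul (hG' n))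
    (hfi.mul_bdd hgi.1 (.of_forall hK)) (fun n ω => by
      rw [Pi.mul_apply, abs_mul, abs_mul]
      exact (mul_le_mul (hFle n ω) (hGle n ω) (abs_nonneg _) (by positivity)).trans_eq (by ring))
    fun ω => (hFlim ω).mul (hGlim ω)
  have limF₁ := tendsto_integral_of_abs_le_const_mul 2 (fun n => (hF' n).abs) hfi.abs
    (fun n ω => by simpa using hFle n ω) fun ω => (hFlim ω).abs
  refine le_of_tendsto_of_tendsto' (limFG.sub (limF.mul limG)).abs (limF₁.const_mul _) fun n => ?_
  obtain ⟨s, hs⟩ := hFr n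
  obtain ⟨t, ht⟩ := hGr n
  exact h.abs_cov_le_of_finite_range_of_abs_le h₁ h₂ (hF n) (hG n) (t := {y ∈ t | |y| ≤ K}) hs
    (fun ω => mem_filter.2 ⟨ht ω, abs_le.2 (hGK n ω)⟩) fun y hy => (mem_filter.1 hy).2

end Covariance

section Mixing

variable {Ω : Type*}

/-- The σ-algebra generated by the variables `Z i` with `i ∈ S`. -/
abbrev sigmaGen {ι : Type*} (Z : ι → Ω → ℝ) (S : Set ι) : MeasurableSpace Ω :=
  ⨆ i ∈ S, MeasurableSpace.comap (Z i) inferInstance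

lemma measurable_sigmaGen {ι : Type*} {Z : ι → Ω → ℝ} {S : Set ι} {i : ι} (hi : i ∈ S) :
    Measurable[sigmaGen Z S] (Z i) :=
  (comap_measurable (Z i)).mono
    (le_iSup₂ (f := fun i (_ : i ∈ S) => MeasurableSpace.comap (Z i) _) i hi) le_rfl

lemma sigmaGen_le {ι : Type*} {m : MeasurableSpace Ω} {Z : ι → Ω → ℝ} {S : Set ι}
    (h : ∀ i ∈ S, Measurable[m] (Z i)) : sigmaGen Z S ≤ m :=
  iSup₂_le fun i hi => (h i hi).comap_le

/-- The sum of the `m` consecutive terms `Z a, …, Z (a + m - 1)`. -/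
def blockSum (Z : ℕ → Ω → ℝ) (a m : ℕ) (ω : Ω) : ℝ :=
  ∑ k ∈ range m, Z (a + k) ω

lemma blockSum_add (Z : ℕ → Ω → ℝ) (a m m' : ℕ) (ω : Ω) :
    blockSum Z a (m + m') ω = blockSum Z a m ω + blockSum Z (a + m) m' ω := by
  simp [blockSum, sum_range_add, add_assoc]

lemma blockSum_succ (Z : ℕ → Ω → ℝ) (a m : ℕ) (ω : Ω) :
    blockSum Z a (m + 1) ω = blockSum Z a m ω + Z (a + m) ω :=
  sum_range_succ _ _

lemma measurable_blockSum {m : MeasurableSpace Ω} {Z : ℕ → Ω → ℝ} {a l : ℕ}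
    (h : ∀ i ∈ Set.Ico a (a + l), Measurable (Z i)) : Measurable (blockSum Z a l) :=
  Finset.measurable_fun_sum _ fun k hk => h _ (by grind)

lemma measurable_sigmaGen_blockSum (Z : ℕ → Ω → ℝ) {S : Set ℕ} {a l : ℕ}
    (h : Set.Ico a (a + l) ⊆ S) : Measurable[sigmaGen Z S] (blockSum Z a l) :=
  measurable_blockSum fun _ hi => measurable_sigmaGen (h hi)

lemma measurableSet_sigmaGen_lt_abs_blockSum (Z : ℕ → Ω → ℝ) (η : ℝ) {S : Set ℕ} {a l : ℕ}
    (h : Set.Ico a (a + l) ⊆ S) : MeasurableSet[sigmaGen Z S] {ω | η < |blockSum Z a l ω|} :=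
  measurable_abs.comp (measurable_sigmaGen_blockSum Z h) measurableSet_Ioi

lemma abs_blockSum_le {Z : ℕ → Ω → ℝ} {B : ℝ} (hB : ∀ i ω, |Z i ω| ≤ B) (a m : ℕ) (ω : Ω) :
    |blockSum Z a m ω| ≤ m * B := by
  calc |blockSum Z a m ω| ≤ ∑ k ∈ range m, |Z (a + k) ω| := abs_sum_le_sum_abs _ _
    _ ≤ m * B := by simpa using sum_le_card_nsmul (range m) _ B fun k _ => hB (a + k) ω

lemma exists_separated_of_four_mul_lt_norm {E : Type*} [SeminormedAddCommGroup E] {S : ℕ → E}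
    {η : ℝ} {M : ℕ} (h₀ : S 0 = 0) (hinc : ∀ i, ‖S (i + 1) - S i‖ ≤ η) (hM : 4 * η < ‖S M‖) :
    ∃ i, i + 2 ≤ M ∧ η < ‖S (i + 1)‖ ∧ η < ‖S M - S (i + 2)‖ := by
  classical
  have hη : 0 ≤ η := (norm_nonneg _).trans (hinc 0)
  have hex : ∃ i, η < ‖S i‖ := ⟨M, by linarith⟩
  obtain ⟨i, hi⟩ : ∃ i, Nat.find hex = i + 1 := by
    refine Nat.exists_eq_succ_of_ne_zero fun h => ?_
    have := Nat.find_spec hex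
    rw [h, h₀, norm_zero] at this
    linarith
  have hfirst : η < ‖S (i + 1)‖ := hi ▸ Nat.find_spec hex
  have hbefore : ‖S i‖ ≤ η := not_lt.1 (Nat.find_min hex (by omega))
  have hle : i + 1 ≤ M := hi ▸ Nat.find_min' hex (by linarith)
  have hstep (j : ℕ) : ‖S (j + 1)‖ ≤ ‖S j‖ + η :=
    (norm_le_norm_add_norm_sub' _ _).trans (add_le_add_right (hinc j) _)
  have h₁ := hstep i
  have h₂ : ‖S (i + 2)‖ ≤ ‖S (i + 1)‖ + η := hstep (i + 1)
  have hne : i + 1 ≠ M := by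
    rintro rfl
    linarith
  have := norm_sub_norm_le (S M) (S (i + 2))
  exact ⟨i, by omega, hfirst, by linarith⟩

variable {mΩ : MeasurableSpace Ω} {μ : Measure Ω}

lemma measureReal_lt_abs_le_integral_sq_div {f : Ω → ℝ} (hf : MemLp f 2 μ) {η : ℝ} (hη : 0 < η) :
    μ.real {ω | η < |f ω|} ≤ (∫ ω, f ω ^ 2 ∂μ) / η ^ 2 := by
  rw [le_div_iff₀' (by positivity)]
  refine le_trans ?_ (mul_meas_ge_le_integral_of_nonneg (.of_forall fun ω => sq_nonneg (f ω))
    hf.integrable_sq (η ^ 2))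
  gcongr with ω
  · exact (hf.integrable_sq.measure_ge_lt_top (by positivity)).ne
  · intro hω
    exact (pow_le_pow_left₀ hη.le hω.le 2).trans_eq (sq_abs _)

/-- A sequence of centered square-integrable variables which is φ-mixing with coefficients `ψ`,
where `ψ m` governs the dependence across `m` skipped indices (so `m = 0` for adjacent blocks). -/
structure IsCenteredMixing (μ : Measure Ω) (Z : ℕ → Ω → ℝ) (ψ : ℕ → ℝ) : Prop where
  measurable : ∀ i, Measurable (Z i)
  memLp : ∀ i, MemLp (Z i) 2 μ
  integral_eq_zero : ∀ i, ∫ ω, Z i ω ∂μ = 0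
  isPhiMixing : ∀ k m,
    IsPhiMixing μ (sigmaGen Z (Set.Iio k)) (sigmaGen Z (Set.Ici (k + m))) (ψ m)

/-- The bound of `IsCenteredMixing.measureReal_four_mul_lt_abs_blockSum_le` for the probability
that `M` consecutive blocks of length `g` have a sum larger than `4 * η`, where `v` is a variance
proxy per term. -/
noncomputable def blockTail (ψ : ℕ → ℝ) (v η : ℝ) (M g : ℕ) : ℝ :=
  M * ((M * g : ℕ) * v / η ^ 2 * ((M * g : ℕ) * v / η ^ 2 + ψ g))

namespace IsCenteredMixing

variable {Z : ℕ → Ω → ℝ} {ψ : ℕ → ℝ}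

lemma const_mul (hZ : IsCenteredMixing μ Z ψ) (c : ℕ → ℝ) :
    IsCenteredMixing μ (fun i ω => c i * Z i ω) ψ where
  measurable i := (hZ.measurable i).const_mul _
  memLp i := (hZ.memLp i).const_mul _
  integral_eq_zero i := by rw [integral_const_mul, hZ.integral_eq_zero, mul_zero]
  isPhiMixing k m := (hZ.isPhiMixing k m).mono
    (sigmaGen_le fun i hi => (measurable_sigmaGen hi).const_mul (c i))
    (sigmaGen_le fun i hi => (measurable_sigmaGen hi).const_mul (c i))

lemma sigmaGen_le (hZ : IsCenteredMixing μ Z ψ) (S : Set ℕ) : sigmaGen Z S ≤ mΩ :=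
  _root_.sigmaGen_le fun i _ => hZ.measurable i

lemma measurable_blockSum (hZ : IsCenteredMixing μ Z ψ) (a m : ℕ) : Measurable (blockSum Z a m) :=
  _root_.measurable_blockSum fun i _ => hZ.measurable i

lemma memLp_blockSum (hZ : IsCenteredMixing μ Z ψ) (a m : ℕ) : MemLp (blockSum Z a m) 2 μ :=
  memLp_finsetSum _ fun k _ => hZ.memLp (a + k)

variable {s v η B : ℝ}

lemma measureReal_lt_abs_blockSum_le (hZ : IsCenteredMixing μ Z ψ)
    (hv : ∀ a m, ∫ ω, blockSum Z a m ω ^ 2 ∂μ ≤ m * v) (hη : 0 < η) (a : ℕ) {m l : ℕ}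
    (hml : m ≤ l) : μ.real {ω | η < |blockSum Z a m ω|} ≤ l * v / η ^ 2 := by
  have hv₀ : 0 ≤ v := by simpa using (integral_nonneg fun ω => sq_nonneg _).trans (hv 0 1)
  refine (measureReal_lt_abs_le_integral_sq_div (hZ.memLp_blockSum a m) hη).trans ?_
  gcongr
  exact (hv a m).trans (by gcongr)

variable [IsProbabilityMeasure μ]

lemma coef_nonneg (hZ : IsCenteredMixing μ Z ψ) (m : ℕ) : 0 ≤ ψ m :=
  (hZ.isPhiMixing 0 m).nonneg

lemma integral_blockSum (hZ : IsCenteredMixing μ Z ψ) (a m : ℕ) :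
    ∫ ω, blockSum Z a m ω ∂μ = 0 := by
  simp only [blockSum]
  rw [integral_finsetSum _ fun k _ => (hZ.memLp (a + k)).integrable one_le_two]
  exact sum_eq_zero fun k _ => hZ.integral_eq_zero (a + k)

lemma integral_mul_le (hZ : IsCenteredMixing μ Z ψ) (hs : ∀ i, ∫ ω, Z i ω ^ 2 ∂μ ≤ s)
    (i m : ℕ) : ∫ ω, Z i ω * Z (i + 1 + m) ω ∂μ ≤ 2 * √(ψ m) * s := by
  have h := (hZ.isPhiMixing (i + 1) m).abs_cov_le (hZ.sigmaGen_le _) (hZ.sigmaGen_le _)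
    (measurable_sigmaGen (Set.mem_Iio.2 i.lt_succ_self)) (measurable_sigmaGen Set.self_mem_Ici)
    (hZ.memLp i) (hZ.memLp (i + 1 + m))
  rw [hZ.integral_eq_zero i, zero_mul, sub_zero] at h
  have hs₀ : 0 ≤ s := (integral_nonneg fun ω => sq_nonneg (Z 0 ω)).trans (hs 0)
  calc _ ≤ 2 * √(ψ m) * √(∫ ω, Z i ω ^ 2 ∂μ) * √(∫ ω, Z (i + 1 + m) ω ^ 2 ∂μ) :=
        (le_abs_self _).trans h
    _ ≤ 2 * √(ψ m) * √s * √s := by gcongr <;> exact hs _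
    _ = 2 * √(ψ m) * s := by rw [mul_assoc, Real.mul_self_sqrt hs₀]

lemma integral_blockSum_mul_le (hZ : IsCenteredMixing μ Z ψ)
    (hψ : Summable fun m => √(ψ m)) (hs : ∀ i, ∫ ω, Z i ω ^ 2 ∂μ ≤ s) (a m : ℕ) :
    ∫ ω, blockSum Z a m ω * Z (a + m) ω ∂μ ≤ 2 * s * ∑' j, √(ψ j) := by
  have hs₀ : 0 ≤ s := (integral_nonneg fun ω => sq_nonneg (Z 0 ω)).trans (hs 0)
  simp only [blockSum, sum_mul]
  have hint (k : ℕ) : Integrable (fun ω => Z (a + k) ω * Z (a + m) ω) μ :=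
    (hZ.memLp _).integrable_mul (hZ.memLp _)
  rw [integral_finsetSum _ fun k _ => hint k]
  calc ∑ k ∈ range m, ∫ ω, Z (a + k) ω * Z (a + m) ω ∂μ
      ≤ ∑ k ∈ range m, 2 * √(ψ (m - 1 - k)) * s := sum_le_sum fun k hk => by
        have := hZ.integral_mul_le hs (a + k) (m - 1 - k)
        rwa [show a + k + 1 + (m - 1 - k) = a + m by grind] at this
    _ = 2 * s * ∑ k ∈ range m, √(ψ k) := by
        rw [sum_range_reflect (fun k => 2 * √(ψ k) * s), mul_sum]
        exact sum_congr rfl fun k _ => by ring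
    _ ≤ 2 * s * ∑' j, √(ψ j) := by
        gcongr
        exact hψ.sum_le_tsum _ fun _ _ => Real.sqrt_nonneg _

lemma integral_blockSum_sq_le (hZ : IsCenteredMixing μ Z ψ) (hψ : Summable fun m => √(ψ m))
    (hs : ∀ i, ∫ ω, Z i ω ^ 2 ∂μ ≤ s) (a m : ℕ) :
    ∫ ω, blockSum Z a m ω ^ 2 ∂μ ≤ m * (s * (1 + 4 * ∑' j, √(ψ j))) := by
  induction m with
  | zero => simp [blockSum]
  | succ m ih =>
    have hS := hZ.memLp_blockSum a m
    have hZm := hZ.memLp (a + m)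
    have hexp : ∫ ω, blockSum Z a (m + 1) ω ^ 2 ∂μ = ∫ ω, blockSum Z a m ω ^ 2 ∂μ +
        2 * ∫ ω, blockSum Z a m ω * Z (a + m) ω ∂μ + ∫ ω, Z (a + m) ω ^ 2 ∂μ := by
      have hmul : Integrable (fun ω => 2 * (blockSum Z a m ω * Z (a + m) ω)) μ :=
        (hS.integrable_mul hZm).const_mul 2
      have hadd : Integrable (fun ω => blockSum Z a m ω ^ 2 +
        2 * (blockSum Z a m ω * Z (a + m) ω)) μ := hS.integrable_sq.add hmul
      simp only [blockSum_succ, add_sq, mul_assoc]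
      rw [integral_add hadd hZm.integrable_sq, integral_add hS.integrable_sq hmul,
        integral_const_mul]
    have hcross := hZ.integral_blockSum_mul_le hψ hs a m
    have hlast := hs (a + m)
    push_cast
    linarith

lemma measureReal_inter_lt_abs_blockSum_le (hZ : IsCenteredMixing μ Z ψ)
    (hv : ∀ a m, ∫ ω, blockSum Z a m ω ^ 2 ∂μ ≤ m * v) (hη : 0 < η) (a g : ℕ) {m m' l : ℕ}
    (hm : m ≤ l) (hm' : m' ≤ l) :
    μ.real ({ω | η < |blockSum Z a m ω|} ∩ {ω | η < |blockSum Z (a + m + g) m' ω|}) ≤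
      (l * v / η ^ 2) * (l * v / η ^ 2 + ψ g) := by
  set P := {ω | η < |blockSum Z a m ω|}
  set Q := {ω | η < |blockSum Z (a + m + g) m' ω|}
  have hψ := hZ.coef_nonneg g
  have hP : μ.real P ≤ l * v / η ^ 2 := hZ.measureReal_lt_abs_blockSum_le hv hη a hm
  have hQ : μ.real Q ≤ l * v / η ^ 2 := hZ.measureReal_lt_abs_blockSum_le hv hη _ hm'
  have hmix := (abs_le.1 (hZ.isPhiMixing (a + m) g
    (measurableSet_sigmaGen_lt_abs_blockSum Z η fun _ hj => hj.2)
    (measurableSet_sigmaGen_lt_abs_blockSum Z η fun _ hj => hj.1) :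
      |μ.real (P ∩ Q) - μ.real P * μ.real Q| ≤ _)).2
  calc μ.real (P ∩ Q) ≤ μ.real P * (μ.real Q + ψ g) := by linarith
    _ ≤ _ := by gcongr; exact measureReal_nonneg.trans hP

-- A long block that is large contains two large parts separated by one short block, and these
-- are nearly independent; this squares the Chebyshev bound.
lemma measureReal_four_mul_lt_abs_blockSum_le (hZ : IsCenteredMixing μ Z ψ)
    (hv : ∀ a m, ∫ ω, blockSum Z a m ω ^ 2 ∂μ ≤ m * v) (hB : ∀ i ω, |Z i ω| ≤ B) (hη : 0 < η)
    {g : ℕ} (hg : g * B ≤ η) (a M : ℕ) :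
    μ.real {ω | 4 * η < |blockSum Z a (M * g) ω|} ≤ blockTail ψ v η M g := by
  set w : ℝ := (M * g : ℕ) * v / η ^ 2
  have hsplit {i j : ℕ} (hij : i ≤ j) (ω : Ω) : blockSum Z a (j * g) ω - blockSum Z a (i * g) ω =
      blockSum Z (a + i * g) ((j - i) * g) ω := by
    rw [sub_eq_iff_eq_add', ← blockSum_add, ← add_mul, Nat.add_sub_of_le hij]
  let PQ (i : ℕ) : Set Ω := {ω | η < |blockSum Z a ((i + 1) * g) ω|} ∩
    {ω | η < |blockSum Z (a + (i + 1) * g + g) ((M - (i + 2)) * g) ω|}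
  have hsub : {ω | 4 * η < |blockSum Z a (M * g) ω|} ⊆
      ⋃ i ∈ {i ∈ range M | i + 2 ≤ M}, PQ i := by
    intro ω hω
    obtain ⟨i, hiM, hP, hQ⟩ := exists_separated_of_four_mul_lt_norm
      (S := fun i => blockSum Z a (i * g) ω) (by simp [blockSum])
      (fun i => by
        rw [hsplit (Nat.le_add_right i 1), Nat.add_sub_cancel_left, one_mul]
        exact (abs_blockSum_le hB _ g ω).trans hg) hω
    rw [hsplit hiM, show a + (i + 2) * g = a + (i + 1) * g + g by ring] at hQ
    exact Set.mem_biUnion (mem_filter.2 ⟨mem_range.2 (by omega), hiM⟩) ⟨hP, hQ⟩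
  have hPQ : ∀ i ∈ {i ∈ range M | i + 2 ≤ M}, μ.real (PQ i) ≤ w * (w + ψ g) := fun i hi =>
    hZ.measureReal_inter_lt_abs_blockSum_le hv hη a g
      (Nat.mul_le_mul_right g (by grind)) (Nat.mul_le_mul_right g (Nat.sub_le _ _))
  have hw : 0 ≤ w := measureReal_nonneg.trans (hZ.measureReal_lt_abs_blockSum_le hv hη a le_rfl)
  have hψ := hZ.coef_nonneg g
  calc _ ≤ μ.real (⋃ i ∈ {i ∈ range M | i + 2 ≤ M}, PQ i) :=
        measureReal_mono hsub (measure_ne_top _ _)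
    _ ≤ ∑ i ∈ range M with i + 2 ≤ M, μ.real (PQ i) := measureReal_biUnion_finset_le _ _
    _ ≤ #{i ∈ range M | i + 2 ≤ M} • (w * (w + ψ g)) := sum_le_card_nsmul _ _ _ hPQ
    _ ≤ M * (w * (w + ψ g)) := by
        rw [nsmul_eq_mul]
        gcongr
        exact_mod_cast (card_filter_le _ _).trans_eq (card_range M)

end IsCenteredMixing

end Mixing

section ExponentialBound

/-- The exponential function, cut off to `0` outside `[-1/2, 1/2]`. -/
noncomputable def truncExp (z : ℝ) : ℝ := if |z| ≤ 1 / 2 then Real.exp z else 0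

lemma truncExp_nonneg (z : ℝ) : 0 ≤ truncExp z := by
  unfold truncExp
  positivity

lemma truncExp_le_two (z : ℝ) : truncExp z ≤ 2 := by
  unfold truncExp
  split_ifs with h
  · have hlog : z ≤ Real.log 2 := by linarith [le_abs_self z, Real.log_two_gt_d9]
    exact (Real.exp_le_exp.2 hlog).trans_eq (Real.exp_log zero_lt_two)
  · exact zero_le_two

lemma measurable_truncExp : Measurable truncExp :=
  Measurable.ite (measurableSet_le measurable_abs measurable_const) Real.measurable_exp
    measurable_const

lemma truncExp_le (z : ℝ) :
    truncExp z ≤ 1 + z + 5 / 8 * z ^ 2 + if 1 / 2 < |z| then |z| else 0 := by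
  unfold truncExp
  by_cases h : |z| ≤ 1 / 2
  · rw [if_pos h, if_neg h.not_gt]
    have hexp := Real.exp_bound (x := z) (by linarith) (n := 3) (by norm_num)
    norm_num [sum_range_succ, Nat.factorial] at hexp
    have hcube : |z| ^ 3 ≤ 1 / 2 * z ^ 2 := by
      rw [← sq_abs z, pow_succ']
      gcongr
    linarith [(abs_le.1 hexp).2, sq_nonneg z]
  · rw [if_neg h, if_pos (not_le.1 h)]
    linarith [neg_abs_le z, sq_nonneg z]

lemma truncExp_of_abs_le {z : ℝ} (h : |z| ≤ 1 / 2) : truncExp z = Real.exp z :=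
  if_pos h

variable {Ω : Type*} {mΩ : MeasurableSpace Ω} {μ : Measure Ω} [IsProbabilityMeasure μ]

lemma integrable_truncExp {U : Ω → ℝ} (hU : Measurable U) :
    Integrable (fun ω => truncExp (U ω)) μ :=
  .of_bound (measurable_truncExp.comp hU).aestronglyMeasurable 2
    (.of_forall fun _ => (abs_of_nonneg (truncExp_nonneg _)).trans_le (truncExp_le_two _))

lemma integral_truncExp_le {U : Ω → ℝ} (hm : Measurable U) (hU : MemLp U 2 μ)
    (h₀ : ∫ ω, U ω ∂μ = 0) {D : ℝ} (hD : ∀ ω, |U ω| ≤ D) :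
    ∫ ω, truncExp (U ω) ∂μ ≤
      1 + 5 / 8 * ∫ ω, U ω ^ 2 ∂μ + D * μ.real {ω | 1 / 2 < |U ω|} := by
  set S := {ω | 1 / 2 < |U ω|}
  have hS : MeasurableSet S := measurableSet_lt measurable_const (measurable_abs.comp hm)
  have hU₁ : Integrable (fun ω => 1 + U ω) μ :=
    (integrable_const 1).add (hU.integrable one_le_two)
  have hU₂ : Integrable (fun ω => 5 / 8 * U ω ^ 2) μ := hU.integrable_sq.const_mul _
  have hU₁₂ : Integrable (fun ω => 1 + U ω + 5 / 8 * U ω ^ 2) μ := hU₁.add hU₂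
  have hind : Integrable (S.indicator fun _ => D) μ := (integrable_const D).indicator hS
  calc ∫ ω, truncExp (U ω) ∂μ
      ≤ ∫ ω, (1 + U ω + 5 / 8 * U ω ^ 2 + S.indicator (fun _ => D) ω) ∂μ := by
        refine integral_mono (integrable_truncExp hm) (hU₁₂.add hind) fun ω => ?_
        refine (truncExp_le (U ω)).trans (add_le_add_right ?_ _)
        by_cases hω : 1 / 2 < |U ω|
        · rw [if_pos hω, Set.indicator_of_mem (show ω ∈ S from hω)]
          exact hD ω
        · rw [if_neg hω, Set.indicator_of_notMem (show ω ∉ S from hω)]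
    _ = 1 + 5 / 8 * ∫ ω, U ω ^ 2 ∂μ + D * μ.real S := by
        rw [integral_add hU₁₂ hind, integral_add hU₁ hU₂,
          integral_add (integrable_const 1) (hU.integrable one_le_two), h₀, integral_const_mul,
          integral_indicator_const _ hS]
        simp [mul_comm]

lemma integrable_prod_of_le {F : ℕ → Ω → ℝ} (hF : ∀ j, Measurable (F j)) (h₀ : ∀ j ω, 0 ≤ F j ω)
    {K : ℝ} (hK : ∀ j ω, F j ω ≤ K) (J : ℕ) : Integrable (fun ω => ∏ j ∈ range J, F j ω) μ := by
  refine .of_bound (Finset.measurable_fun_prod _ fun j _ => hF j).aestronglyMeasurable (K ^ J)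
    (.of_forall fun ω => ?_)
  rw [Real.norm_of_nonneg (prod_nonneg fun j _ => h₀ j ω)]
  exact (prod_le_prod (fun j _ => h₀ j ω) fun j _ => hK j ω).trans_eq (by simp)

lemma integral_prod_le_pow {F : ℕ → Ω → ℝ} (hF : ∀ j, Measurable (F j)) (h₀ : ∀ j ω, 0 ≤ F j ω)
    {K R φ : ℝ} (hK : ∀ j ω, F j ω ≤ K) (hR : ∀ j, ∫ ω, F j ω ∂μ ≤ R)
    (hmix : ∀ j, IsPhiMixing μ (sigmaGen F (Set.Iio j)) (sigmaGen F {j}) φ) (J : ℕ) :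
    ∫ ω, ∏ j ∈ range J, F j ω ∂μ ≤ (R + 2 * φ * K) ^ J := by
  obtain ⟨ω₀⟩ := nonempty_of_isProbabilityMeasure μ
  have hK₀ : 0 ≤ K := (h₀ 0 ω₀).trans (hK 0 ω₀)
  have hφ := (hmix 0).nonneg
  have hR₀ : 0 ≤ R := (integral_nonneg (h₀ 0)).trans (hR 0)
  induction J with
  | zero => simp
  | succ J ih =>
    have hprod₀ (ω : Ω) : 0 ≤ ∏ j ∈ range J, F j ω := prod_nonneg fun j _ => h₀ j ω
    have hcov := (hmix J).abs_cov_le_of_abs_le (sigmaGen_le fun j _ => hF j)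
      (sigmaGen_le fun j _ => hF j)
      (Finset.measurable_fun_prod (range J) fun j hj => measurable_sigmaGen (mem_range.1 hj))
      (measurable_sigmaGen (Set.mem_singleton J)) (integrable_prod_of_le hF h₀ hK J)
      fun ω => (abs_of_nonneg (h₀ J ω)).trans_le (hK J ω)
    simp only [abs_of_nonneg (hprod₀ _)] at hcov
    calc ∫ ω, ∏ j ∈ range (J + 1), F j ω ∂μ
        = ∫ ω, (∏ j ∈ range J, F j ω) * F J ω ∂μ := by simp only [prod_range_succ]
      _ ≤ (∫ ω, ∏ j ∈ range J, F j ω ∂μ) * (∫ ω, F J ω ∂μ + 2 * φ * K) := by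
        linarith [(abs_le.1 hcov).2]
      _ ≤ (R + 2 * φ * K) ^ J * (R + 2 * φ * K) := by
        gcongr
        · exact add_nonneg (integral_nonneg (h₀ J)) (by positivity)
        · exact hR J
      _ = (R + 2 * φ * K) ^ (J + 1) := (pow_succ _ _).symm

-- `2 e^(P+Q) ≤ e^(2P) + e^(2Q)` decouples the two halves of the sum.
lemma measureReal_le_add_le {F G : Ω → ℝ} (hF : Integrable F μ) (hG : Integrable G μ)
    (hF₀ : ∀ ω, 0 ≤ F ω) (hG₀ : ∀ ω, 0 ≤ G ω) (P Q : Ω → ℝ) (x : ℝ) :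
    μ.real {ω | x ≤ P ω + Q ω} ≤ μ.real {ω | F ω < Real.exp (2 * P ω)} +
      μ.real {ω | G ω < Real.exp (2 * Q ω)} +
      Real.exp (-x) * ((∫ ω, F ω ∂μ + ∫ ω, G ω ∂μ) / 2) := by
  have hsub : {ω | x ≤ P ω + Q ω} ⊆
      ({ω | F ω < Real.exp (2 * P ω)} ∪ {ω | G ω < Real.exp (2 * Q ω)}) ∪
        {ω | Real.exp x ≤ (F ω + G ω) / 2} := by
    intro ω hω
    by_contra hnot
    simp only [Set.mem_union, Set.mem_ofPred_eq, not_or, not_lt, not_le] at hnot hω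
    obtain ⟨⟨hFω, hGω⟩, hxω⟩ := hnot
    have hexp : Real.exp x ≤ Real.exp (P ω) * Real.exp (Q ω) := by
      rw [← Real.exp_add]
      exact Real.exp_le_exp.2 hω
    have hsq (y : ℝ) : Real.exp (2 * y) = Real.exp y ^ 2 := Real.exp_nat_mul y 2
    rw [hsq] at hFω hGω
    linarith [two_mul_le_add_sq (Real.exp (P ω)) (Real.exp (Q ω))]
  have hmarkov : μ.real {ω | Real.exp x ≤ (F ω + G ω) / 2} ≤
      Real.exp (-x) * ((∫ ω, F ω ∂μ + ∫ ω, G ω ∂μ) / 2) := by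
    have h := mul_meas_ge_le_integral_of_nonneg (.of_forall fun ω =>
      div_nonneg (add_nonneg (hF₀ ω) (hG₀ ω)) zero_le_two) ((hF.add hG).div_const 2) (Real.exp x)
    rw [Real.exp_neg, ← div_eq_inv_mul, le_div_iff₀' (Real.exp_pos x), ← integral_add hF hG,
      ← integral_div]
    exact h
  refine (measureReal_mono hsub).trans ((measureReal_union_le _ _).trans ?_)
  exact add_le_add (measureReal_union_le _ _) hmarkov

/-- The product of the truncated exponentials of twice the sums of `J` blocks of length `l`, the
first one starting at `a`, with gaps of length `l` in between. -/
noncomputable def truncExpProd {Ω : Type*} (Z : ℕ → Ω → ℝ) (l J a : ℕ) (ω : Ω) : ℝ :=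
  ∏ j ∈ range J, truncExp (2 * blockSum Z (a + j * (2 * l)) l ω)

lemma truncExpProd_nonneg {Ω : Type*} (Z : ℕ → Ω → ℝ) (l J a : ℕ) (ω : Ω) :
    0 ≤ truncExpProd Z l J a ω :=
  prod_nonneg fun _ _ => truncExp_nonneg _

lemma blockSum_mul_two_mul {Ω : Type*} (Z : ℕ → Ω → ℝ) (a l J : ℕ) (ω : Ω) :
    blockSum Z a (J * (2 * l)) ω =
      ∑ j ∈ range J, blockSum Z (a + j * (2 * l)) l ω +
        ∑ j ∈ range J, blockSum Z (a + l + j * (2 * l)) l ω := by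
  induction J with
  | zero => simp [blockSum]
  | succ J ih =>
    rw [add_one_mul, blockSum_add, ih, sum_range_succ, sum_range_succ, two_mul l, blockSum_add,
      add_right_comm a l]
    ring

/-- The bound of `IsCenteredMixing.measureReal_le_blockSum_le` for the probability that the sum of
`2 * J` blocks of length `M * g` is at least `x`. -/
noncomputable def bernsteinBound (ψ : ℕ → ℝ) (B v x : ℝ) (M g J : ℕ) : ℝ :=
  2 * J * blockTail ψ v (1 / 16) M g + Real.exp (-x + J * (5 / 2 * ((M * g : ℕ) * v) +
    2 * ((M * g : ℕ) * B) * blockTail ψ v (1 / 16) M g + 4 * ψ (M * g)))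

namespace IsCenteredMixing

variable {Z : ℕ → Ω → ℝ} {ψ : ℕ → ℝ} {B v π R : ℝ}

lemma integral_truncExp_blockSum_le (hZ : IsCenteredMixing μ Z ψ)
    (hv : ∀ a m, ∫ ω, blockSum Z a m ω ^ 2 ∂μ ≤ m * v) (hB : ∀ i ω, |Z i ω| ≤ B) (a l : ℕ)
    (hπ : μ.real {ω | 1 / 4 < |blockSum Z a l ω|} ≤ π) :
    ∫ ω, truncExp (2 * blockSum Z a l ω) ∂μ ≤ 1 + 5 / 2 * (l * v) + 2 * (l * B) * π := by
  have habs (ω : Ω) : |2 * blockSum Z a l ω| = 2 * |blockSum Z a l ω| := by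
    rw [abs_mul, abs_two]
  have h := integral_truncExp_le ((hZ.measurable_blockSum a l).const_mul 2)
    ((hZ.memLp_blockSum a l).const_mul 2)
    (by rw [integral_const_mul, hZ.integral_blockSum, mul_zero])
    fun ω => (habs ω).trans_le (mul_le_mul_of_nonneg_left (abs_blockSum_le hB a l ω) zero_le_two)
  have hset : {ω | 1 / 2 < |2 * blockSum Z a l ω|} = {ω | 1 / 4 < |blockSum Z a l ω|} := by
    ext ω
    rw [Set.mem_ofPred_eq, Set.mem_ofPred_eq, habs]
    constructor <;> intro <;> linarith
  obtain ⟨ω₀⟩ := nonempty_of_isProbabilityMeasure μ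
  have hB₀ : 0 ≤ B := (abs_nonneg _).trans (hB 0 ω₀)
  simp only [mul_pow, integral_const_mul, hset] at h
  calc _ ≤ _ := h
    _ ≤ 1 + 5 / 8 * (2 ^ 2 * (l * v)) + 2 * (l * B) * π := by
      gcongr
      exact hv a l
    _ = _ := by ring

lemma integrable_truncExpProd (hZ : IsCenteredMixing μ Z ψ) (l J a : ℕ) :
    Integrable (truncExpProd Z l J a) μ :=
  integrable_prod_of_le
    (fun _ => measurable_truncExp.comp ((hZ.measurable_blockSum _ l).const_mul 2))
    (fun _ _ => truncExp_nonneg _) (fun _ _ => truncExp_le_two _) J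

lemma integral_truncExpProd_le (hZ : IsCenteredMixing μ Z ψ) {l : ℕ}
    (hR : ∀ a, ∫ ω, truncExp (2 * blockSum Z a l ω) ∂μ ≤ R) (J a : ℕ) :
    ∫ ω, truncExpProd Z l J a ω ∂μ ≤ (R + 4 * ψ l) ^ J := by
  have hmeas {m : MeasurableSpace Ω} {j : ℕ}
      (h : Measurable[m] (blockSum Z (a + j * (2 * l)) l)) :
      Measurable[m] fun ω => truncExp (2 * blockSum Z (a + j * (2 * l)) l ω) :=
    measurable_truncExp.comp (h.const_mul 2)
  refine (integral_prod_le_pow (fun j => hmeas (hZ.measurable_blockSum _ l))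
    (fun _ _ => truncExp_nonneg _) (fun _ _ => truncExp_le_two _) (fun _ => hR _)
    (φ := ψ l) (fun j => ?_) J).trans_eq (by ring)
  rcases j with _ | j
  · exact (isPhiMixing_bot_left (hZ.coef_nonneg l)).mono (_root_.sigmaGen_le (by simp)) le_rfl
  · refine (hZ.isPhiMixing (a + j * (2 * l) + l) l).mono
      (_root_.sigmaGen_le fun i hi => hmeas (measurable_sigmaGen_blockSum Z fun k hk => ?_))
      (_root_.sigmaGen_le fun i hi => hmeas (measurable_sigmaGen_blockSum Z fun k hk => ?_))
    · have : i * (2 * l) ≤ j * (2 * l) := Nat.mul_le_mul_right _ (Nat.lt_succ_iff.1 hi)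
      exact hk.2.trans_le (by omega)
    · obtain rfl : i = j + 1 := hi
      exact hk.1.trans' (by linarith)

lemma measureReal_truncExpProd_lt_exp_le (Z : ℕ → Ω → ℝ) {l : ℕ}
    (hπ : ∀ a, μ.real {ω | 1 / 4 < |blockSum Z a l ω|} ≤ π) (J a : ℕ) :
    μ.real {ω | truncExpProd Z l J a ω <
      Real.exp (2 * ∑ j ∈ range J, blockSum Z (a + j * (2 * l)) l ω)} ≤ J * π := by
  have hsub : {ω | truncExpProd Z l J a ω <
      Real.exp (2 * ∑ j ∈ range J, blockSum Z (a + j * (2 * l)) l ω)} ⊆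
      ⋃ j ∈ range J, {ω | 1 / 4 < |blockSum Z (a + j * (2 * l)) l ω|} := by
    intro ω hω
    by_contra hnot
    simp only [Set.mem_iUnion, Set.mem_ofPred_eq, not_exists, not_lt] at hnot
    refine (Set.mem_ofPred.1 hω).ne ?_
    rw [mul_sum, Real.exp_sum]
    refine prod_congr rfl fun j hj => truncExp_of_abs_le ?_
    rw [abs_mul, abs_two]
    linarith [hnot j hj]
  calc _ ≤ ∑ j ∈ range J, μ.real {ω | 1 / 4 < |blockSum Z (a + j * (2 * l)) l ω|} :=
        (measureReal_mono hsub (measure_ne_top _ _)).trans (measureReal_biUnion_finset_le _ _)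
    _ ≤ J * π := by simpa using sum_le_card_nsmul (range J) _ π fun j _ => hπ _

theorem measureReal_le_blockSum_le (hZ : IsCenteredMixing μ Z ψ)
    (hv : ∀ a m, ∫ ω, blockSum Z a m ω ^ 2 ∂μ ≤ m * v) (hB : ∀ i ω, |Z i ω| ≤ B) {g : ℕ}
    (hg : g * B ≤ 1 / 16) (M J : ℕ) (x : ℝ) :
    μ.real {ω | x ≤ blockSum Z 0 (J * (2 * (M * g))) ω} ≤ bernsteinBound ψ B v x M g J := by
  set π := blockTail ψ v (1 / 16) M g
  set l := M * g
  set E := 5 / 2 * (l * v) + 2 * (l * B) * π + 4 * ψ l with hE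
  have hπ (a : ℕ) : μ.real {ω | 1 / 4 < |blockSum Z a l ω|} ≤ π := by
    rw [show (1 / 4 : ℝ) = 4 * (1 / 16) by norm_num]
    exact hZ.measureReal_four_mul_lt_abs_blockSum_le hv hB (by norm_num) hg a M
  have hint (a : ℕ) : ∫ ω, truncExpProd Z l J a ω ∂μ ≤ Real.exp (J * E) := by
    refine (hZ.integral_truncExpProd_le
      (fun a => hZ.integral_truncExp_blockSum_le hv hB a l (hπ a)) J a).trans ?_
    have hR₀ : 0 ≤ 1 + E := by
      have := (integral_nonneg fun ω => truncExp_nonneg (2 * blockSum Z 0 l ω)).trans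
        (hZ.integral_truncExp_blockSum_le hv hB 0 l (hπ 0))
      linarith [hZ.coef_nonneg l, hE]
    calc _ = (1 + E) ^ J := by rw [hE]; ring
      _ ≤ Real.exp E ^ J := by
        gcongr
        exact (add_comm _ _).trans_le (Real.add_one_le_exp E)
      _ = Real.exp (J * E) := (Real.exp_nat_mul E J).symm
  have hsplit := measureReal_le_add_le (hZ.integrable_truncExpProd l J 0)
    (hZ.integrable_truncExpProd l J (0 + l)) (truncExpProd_nonneg Z l J 0)
    (truncExpProd_nonneg Z l J (0 + l)) (fun ω => ∑ j ∈ range J, blockSum Z (0 + j * (2 * l)) l ω)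
    (fun ω => ∑ j ∈ range J, blockSum Z (0 + l + j * (2 * l)) l ω) x
  simp only [← blockSum_mul_two_mul] at hsplit
  calc _ ≤ _ := hsplit
    _ ≤ J * π + J * π + Real.exp (-x) * ((Real.exp (J * E) + Real.exp (J * E)) / 2) := by
      gcongr
      · exact measureReal_truncExpProd_lt_exp_le Z hπ J 0
      · exact measureReal_truncExpProd_lt_exp_le Z hπ J (0 + l)
      · exact hint 0
      · exact hint (0 + l)
    _ = bernsteinBound ψ B v x M g J := by
      rw [bernsteinBound, Real.exp_add]
      ring

end IsCenteredMixing

end ExponentialBound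

section Asymptotics

open Asymptotics

/-- Asymptotic conditions under which `bernsteinBound` converges when `N` variables bounded by `B`
and with variance proxy of order `1 / N` are cut into blocks of `M` pieces of length `g`. -/
structure IsBlockScale {ι : Type*} (F : Filter ι) (ψ : ℕ → ℝ) (N B : ι → ℝ) (M g : ι → ℕ) :
    Prop where
  pos : ∀ᶠ i in F, 0 < N i
  block_pos : ∀ᶠ i in F, 0 < M i * g i
  piece_mul_bound : Tendsto (fun i => g i * B i) F (𝓝 0)
  block_div : Tendsto (fun i => (M i * g i : ℕ) / N i) F (𝓝 0)
  coef_block_div : Tendsto (fun i => ψ (M i * g i) / ((M i * g i : ℕ) / N i)) F (𝓝 0)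
  card_mul_block_div : Tendsto (fun i => M i * ((M i * g i : ℕ) / N i)) F (𝓝 0)
  card_mul_coef : Tendsto (fun i => M i * ψ (g i)) F (𝓝 0)
  bound_mul_card_mul_block_div :
    Tendsto (fun i => (M i * g i : ℕ) * B i * (M i * ((M i * g i : ℕ) / N i))) F (𝓝 0)
  bound_mul_card_mul_coef :
    Tendsto (fun i => (M i * g i : ℕ) * B i * (M i * ψ (g i))) F (𝓝 0)

lemma tendsto_natFloor_add_one_mul {ι : Type*} {F : Filter ι} {q : ι → ℝ}
    (hq : Tendsto q F (𝓝[>] 0)) : Tendsto (fun i => ((⌊1 / q i⌋₊ + 1 : ℕ) : ℝ) * q i) F (𝓝 1) := by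
  have hinv : Tendsto (fun i => 1 / q i) F atTop := by
    simpa only [one_div, Function.comp_def] using tendsto_inv_nhdsGT_zero.comp hq
  have hfloor : Tendsto (fun i => (⌊1 / q i⌋₊ : ℝ) / (1 / q i) + q i) F (𝓝 (1 + 0)) :=
    ((tendsto_nat_floor_div_atTop (R := ℝ)).comp hinv).add (tendsto_nhds_of_tendsto_nhdsWithin hq)
  rw [add_zero] at hfloor
  refine hfloor.congr fun i => ?_
  push_cast
  rw [div_div_eq_mul_div, div_one]
  ring

/-- A number `J` such that `2 * J` blocks of length `l` cover `N` terms. -/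
noncomputable def pairCount (N : ℝ) (l : ℕ) : ℕ := ⌊N / (2 * l)⌋₊ + 1

lemma le_pairCount_mul {N : ℝ} {l : ℕ} (hl : 0 < l) : N ≤ (pairCount N l * (2 * l) : ℕ) := by
  have hl₀ : (0 : ℝ) < 2 * l := by positivity
  have h := (div_le_iff₀ hl₀).1 (Nat.lt_floor_add_one (N / (2 * l))).le
  rw [pairCount]
  push_cast
  exact h

namespace IsBlockScale

variable {ι : Type*} {F : Filter ι} {ψ : ℕ → ℝ} {N B : ι → ℝ} {M g : ι → ℕ}

lemma tendsto_pairCount_mul (h : IsBlockScale F ψ N B M g) :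
    Tendsto (fun i => pairCount (N i) (M i * g i) * ((M i * g i : ℕ) / N i)) F (𝓝 (1 / 2)) := by
  have hq : Tendsto (fun i => 2 * ((M i * g i : ℕ) / N i)) F (𝓝[>] 0) := by
    refine tendsto_nhdsWithin_iff.2 ⟨by simpa using h.block_div.const_mul 2, ?_⟩
    filter_upwards [h.pos, h.block_pos] with i hN hl
    have : (0 : ℝ) < (M i * g i : ℕ) := Nat.cast_pos.2 hl
    exact Set.mem_Ioi.2 (by positivity)
  refine ((tendsto_natFloor_add_one_mul hq).div_const 2).congr fun i => ?_
  rw [pairCount, mul_div_assoc', one_div_div]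
  ring

lemma tendsto_pairCount_mul_coef (h : IsBlockScale F ψ N B M g) :
    Tendsto (fun i => pairCount (N i) (M i * g i) * ψ (M i * g i)) F (𝓝 0) := by
  have hlim := h.tendsto_pairCount_mul.mul h.coef_block_div
  rw [mul_zero] at hlim
  refine hlim.congr' ?_
  filter_upwards [h.pos, h.block_pos] with i hN hl
  have : (0 : ℝ) < (M i * g i : ℕ) := Nat.cast_pos.2 hl
  field_simp

lemma tendsto_pairCount_mul_blockTail (h : IsBlockScale F ψ N B M g) (τ : ℝ) {u : ι → ℝ}
    (hu₁ : Tendsto (fun i => u i * (M i * ((M i * g i : ℕ) / N i))) F (𝓝 0))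
    (hu₂ : Tendsto (fun i => u i * (M i * ψ (g i))) F (𝓝 0)) :
    Tendsto (fun i => u i * (pairCount (N i) (M i * g i) *
      blockTail ψ (τ / N i) (1 / 16) (M i) (g i))) F (𝓝 0) := by
  have hlim := (h.tendsto_pairCount_mul.const_mul (256 * τ)).mul
    ((hu₁.const_mul (256 * τ)).add hu₂)
  rw [mul_zero, add_zero, mul_zero] at hlim
  refine hlim.congr fun i => ?_
  rw [blockTail]
  ring

theorem tendsto_bernsteinBound (h : IsBlockScale F ψ N B M g) (τ x : ℝ) :
    Tendsto (fun i => bernsteinBound ψ (B i) (τ / N i) x (M i) (g i)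
      (pairCount (N i) (M i * g i))) F (𝓝 (Real.exp (-x + 5 / 4 * τ))) := by
  have hT := h.tendsto_pairCount_mul_blockTail τ (u := fun _ => 1)
    (by simpa using h.card_mul_block_div) (by simpa using h.card_mul_coef)
  have hBT := h.tendsto_pairCount_mul_blockTail τ h.bound_mul_card_mul_block_div
    h.bound_mul_card_mul_coef
  have hlim := (hT.const_mul 2).add ((Real.continuous_exp.tendsto _).comp
    ((((h.tendsto_pairCount_mul.const_mul (5 / 2 * τ)).add (hBT.const_mul 2)).add
      (h.tendsto_pairCount_mul_coef.const_mul 4)).const_add (-x)))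
  rw [show 2 * 0 + Real.exp (-x + (5 / 2 * τ * (1 / 2) + 2 * 0 + 4 * 0)) =
    Real.exp (-x + 5 / 4 * τ) by ring_nf] at hlim
  refine hlim.congr fun i => ?_
  rw [bernsteinBound, Function.comp_apply]
  congr 1
  · ring
  · congr 1
    ring

end IsBlockScale

lemma isTheta_natFloor_rpow {a : ℝ} (ha : 0 < a) :
    (fun x : ℝ => (⌊x ^ a⌋₊ : ℝ)) =Θ[atTop] fun x => x ^ a :=
  (isEquivalent_nat_floor.comp_tendsto (tendsto_rpow_atTop ha)).isTheta

lemma isTheta_natCeil_rpow {a : ℝ} (ha : 0 < a) :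
    (fun x : ℝ => (⌈x ^ a⌉₊ : ℝ)) =Θ[atTop] fun x => x ^ a :=
  (isEquivalent_nat_ceil.comp_tendsto (tendsto_rpow_atTop ha)).isTheta

lemma rpow_mul_rpow_eventuallyEq (s t : ℝ) :
    (fun x : ℝ => x ^ s * x ^ t) =ᶠ[atTop] fun x => x ^ (s + t) :=
  (eventually_gt_atTop 0).mono fun _ hx => (Real.rpow_add hx s t).symm

lemma isBigO_mul_rpow {f₁ f₂ : ℝ → ℝ} {s t : ℝ} (h₁ : f₁ =O[atTop] fun x => x ^ s)
    (h₂ : f₂ =O[atTop] fun x => x ^ t) : (fun x => f₁ x * f₂ x) =O[atTop] fun x => x ^ (s + t) :=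
  (h₁.mul h₂).trans_eventuallyEq (rpow_mul_rpow_eventuallyEq s t)

lemma isBigO_comp_rpow {ψ : ℕ → ℝ} {r s : ℝ} (hs : 0 < s)
    (hψ : ψ =O[atTop] fun m => (m : ℝ) ^ (-r)) {u : ℝ → ℕ}
    (hu : (fun x => (u x : ℝ)) =Θ[atTop] fun x => x ^ s) :
    (fun x => ψ (u x)) =O[atTop] fun x => x ^ (s * -r) := by
  have hutop : Tendsto (fun x => (u x : ℝ)) atTop atTop := by
    simpa [Function.comp_def] using hu.tendsto_norm_atTop_iff.2
      (tendsto_norm_atTop_atTop.comp (tendsto_rpow_atTop hs))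
  have hpow := hu.rpow (r := -r) (.of_forall fun x => Nat.cast_nonneg _)
    ((eventually_ge_atTop 0).mono fun x hx => Real.rpow_nonneg hx s)
  refine (hψ.comp_tendsto (tendsto_natCast_atTop_iff.1 hutop)).trans (hpow.1.trans_eventuallyEq ?_)
  exact (eventually_ge_atTop 0).mono fun x hx => (Real.rpow_mul hx s (-r)).symm

lemma tendsto_zero_of_isBigO_rpow {f : ℝ → ℝ} {s : ℝ} (hs : s < 0)
    (h : f =O[atTop] fun x => x ^ s) : Tendsto f atTop (𝓝 0) :=
  h.trans_tendsto (by simpa using tendsto_rpow_neg_atTop (neg_pos.2 hs))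

lemma isBlockScale_rpow {ψ : ℕ → ℝ} {r κ a b : ℝ} (ha : 0 < a) (hb : 0 < b)
    (hψ : ψ =O[atTop] fun m => (m : ℝ) ^ (-r)) (haκ : a < κ) (hκ : κ < a + b)
    (h₁ : 1 < (a + b) * (1 + r)) (h₂ : a + b - κ + (b + (a + b - 1)) < 0)
    (h₃ : a + b - κ + (b + a * -r) < 0) (K : ℝ) :
    IsBlockScale atTop ψ id (fun x => K * x ^ (-κ)) (fun x => ⌈x ^ b⌉₊) fun x => ⌊x ^ a⌋₊ := by
  have hg := isTheta_natFloor_rpow ha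
  have hM := isTheta_natCeil_rpow hb
  have hl : (fun x : ℝ => ((⌈x ^ b⌉₊ * ⌊x ^ a⌋₊ : ℕ) : ℝ)) =Θ[atTop] fun x => x ^ (b + a) := by
    simpa only [Nat.cast_mul] using (hM.mul hg).trans_eventuallyEq (rpow_mul_rpow_eventuallyEq b a)
  have hdiv : (fun x : ℝ => ((⌈x ^ b⌉₊ * ⌊x ^ a⌋₊ : ℕ) : ℝ) / x) =Θ[atTop]
      fun x => x ^ (b + a - 1) :=
    (hl.div (isTheta_refl id atTop)).trans_eventuallyEq <|
      (eventually_ne_atTop 0).mono fun x hx => (Real.rpow_sub_one hx _).symm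
  have hB : (fun x : ℝ => K * x ^ (-κ)) =O[atTop] fun x => x ^ (-κ) :=
    (isBigO_refl _ _).const_mul_left K
  have hψg := isBigO_comp_rpow ha hψ hg
  have hψl := isBigO_comp_rpow (add_pos hb ha) hψ hl
  have hdiv_inv : (fun x : ℝ => (((⌈x ^ b⌉₊ * ⌊x ^ a⌋₊ : ℕ) : ℝ) / x)⁻¹) =O[atTop]
      fun x => x ^ (-(b + a - 1)) :=
    hdiv.inv.1.trans_eventuallyEq <|
      (eventually_ge_atTop 0).mono fun x hx => (Real.rpow_neg hx _).symm
  have hlB := isBigO_mul_rpow hl.1 hB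
  have hMdiv := isBigO_mul_rpow hM.1 hdiv.1
  have hMψ := isBigO_mul_rpow hM.1 hψg
  exact
    { pos := eventually_gt_atTop 0
      block_pos := by
        filter_upwards [eventually_ge_atTop 1] with x hx
        exact Nat.mul_pos (Nat.ceil_pos.2 (by positivity))
          (Nat.floor_pos.2 (Real.one_le_rpow hx ha.le))
      piece_mul_bound := tendsto_zero_of_isBigO_rpow (by linarith) (isBigO_mul_rpow hg.1 hB)
      block_div := tendsto_zero_of_isBigO_rpow (by linarith) hdiv.1
      coef_block_div :=
        tendsto_zero_of_isBigO_rpow (by linarith) (isBigO_mul_rpow hψl hdiv_inv)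
      card_mul_block_div := tendsto_zero_of_isBigO_rpow (by linarith) hMdiv
      card_mul_coef := tendsto_zero_of_isBigO_rpow (by linarith) hMψ
      bound_mul_card_mul_block_div :=
        tendsto_zero_of_isBigO_rpow (by linarith) (isBigO_mul_rpow hlB hMdiv)
      bound_mul_card_mul_coef :=
        tendsto_zero_of_isBigO_rpow (by linarith) (isBigO_mul_rpow hlB hMψ) }

lemma exists_isBlockScale {ψ : ℕ → ℝ} {r : ℝ} (hr : 0 < r)
    (hψ : ψ =O[atTop] fun m => (m : ℝ) ^ (-r)) (K : ℝ) :
    ∃ M g : ℝ → ℕ, IsBlockScale atTop ψ id (fun x => K * x ^ (-(1 / (1 + r)))) M g := by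
  obtain ⟨κ, hκ, hκr⟩ : ∃ κ, 0 < κ ∧ κ * (1 + r) = 1 := ⟨1 / (1 + r), by positivity, by field_simp⟩
  obtain ⟨θ, hθ, hθr⟩ : ∃ θ, 0 < θ ∧ 5 * θ * (1 + r) = r :=
    ⟨r / (5 * (1 + r)), by positivity, by field_simp⟩
  have hκθ : 0 < κ * θ := mul_pos hκ hθ
  have hκθr : 0 < κ * θ * r := mul_pos hκθ hr
  have hκr₅ : κ * r = 5 * (κ * θ) + 5 * (κ * θ * r) := by
    linear_combination (-κ) * hθr
  rw [show 1 / (1 + r) = κ by rw [eq_comm, eq_div_iff (by positivity), hκr]]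
  -- Relative to `x ^ κ`, pieces are shorter and blocks longer by the factor `x ^ (κ * θ)`.
  exact ⟨_, _, isBlockScale_rpow (a := κ * (1 - θ)) (b := 2 * (κ * θ)) (by nlinarith)
    (by linarith) hψ (by linarith) (by linarith) (by linarith) (by linarith) (by linarith) K⟩

end Asymptotics

section Deviation

open Asymptotics

variable {Ω : Type*} {mΩ : MeasurableSpace Ω} {μ : Measure Ω} [IsProbabilityMeasure μ]
  {ψ : ℕ → ℝ}

lemma IsCenteredMixing.measureReal_le_sum_range_le {Z : ℕ → Ω → ℝ} {B s : ℝ}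
    (hZ : IsCenteredMixing μ Z ψ) (hψ : Summable fun m => √(ψ m))
    (hs : ∀ i, ∫ ω, Z i ω ^ 2 ∂μ ≤ s) (hB : ∀ i ω, |Z i ω| ≤ B) {n M g J : ℕ}
    (hg : g * B ≤ 1 / 16) (hn : n ≤ J * (2 * (M * g))) (x : ℝ) :
    μ.real {ω | x ≤ ∑ i ∈ range n, Z i ω} ≤
      bernsteinBound ψ B (s * (1 + 4 * ∑' j, √(ψ j))) x M g J := by
  obtain ⟨ω₀⟩ := nonempty_of_isProbabilityMeasure μ
  have hB₀ : 0 ≤ B := (abs_nonneg _).trans (hB 0 ω₀)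
  have hs₀ : 0 ≤ s := (integral_nonneg fun ω => sq_nonneg (Z 0 ω)).trans (hs 0)
  let c (i : ℕ) : ℝ := if i < n then 1 else 0
  have hsum (ω : Ω) : blockSum (fun i ω => c i * Z i ω) 0 (J * (2 * (M * g))) ω =
      ∑ i ∈ range n, Z i ω := by
    simp only [blockSum, zero_add, c, ite_mul, one_mul, zero_mul]
    rw [← sum_filter]
    exact sum_congr (by grind) fun _ _ => rfl
  have hcs (i : ℕ) : ∫ ω, (c i * Z i ω) ^ 2 ∂μ ≤ s := by
    by_cases hi : i < n <;> simp [c, hi, hs, hs₀]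
  have hcB (i : ℕ) (ω : Ω) : |c i * Z i ω| ≤ B := by
    by_cases hi : i < n <;> simp [c, hi, hB, hB₀]
  have h := (hZ.const_mul c).measureReal_le_blockSum_le
    ((hZ.const_mul c).integral_blockSum_sq_le hψ hcs) hcB hg M J x
  simpa only [hsum] using h

theorem eventually_forall_measureReal_le_sum_range_lt {r K τ x y : ℝ} (hr : 0 < r)
    (hψ : ψ =O[atTop] fun m => (m : ℝ) ^ (-r)) (hψsum : Summable fun m => √(ψ m))
    (hy : Real.exp (-x + 5 / 4 * τ) < y) :
    ∀ᶠ n : ℕ in atTop, ∀ Z, IsCenteredMixing μ Z ψ →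
      (∀ i ω, |Z i ω| ≤ K * (n : ℝ) ^ (-(1 / (1 + r)))) →
      (∀ i, ∫ ω, Z i ω ^ 2 ∂μ ≤ τ / n / (1 + 4 * ∑' j, √(ψ j))) →
      μ.real {ω | x ≤ ∑ i ∈ range n, Z i ω} < y := by
  have hΦ : 0 < 1 + 4 * ∑' j, √(ψ j) := by
    have : 0 ≤ ∑' j, √(ψ j) := tsum_nonneg fun _ => Real.sqrt_nonneg _
    positivity
  obtain ⟨M, g, h⟩ := exists_isBlockScale hr hψ K
  have hevent := ((h.tendsto_bernsteinBound τ x).eventually_lt_const hy).and <|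
    (h.piece_mul_bound.eventually_le_const (show (0 : ℝ) < 1 / 16 by norm_num)).and h.block_pos
  filter_upwards [tendsto_natCast_atTop_atTop.eventually hevent] with n ⟨hbound, hg, hl⟩ Z hZ hB hs
  have hcover : n ≤ pairCount n (M n * g n) * (2 * (M n * g n)) := by
    exact_mod_cast le_pairCount_mul (N := n) hl
  have hZn := hZ.measureReal_le_sum_range_le hψsum hs hB hg hcover x
  rw [div_mul_cancel₀ _ hΦ.ne'] at hZn
  exact hZn.trans_lt hbound

end Deviation

section MainPart

variable {Ω : Type*} {mΩ : MeasurableSpace Ω} {μ : Measure Ω} {X : ℕ → Ω → ℝ}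

lemma phiCoef_nonneg (μ : Measure Ω) (X : ℕ → Ω → ℝ) (m : ℕ) : 0 ≤ phiCoef μ X m := by
  refine Real.sSup_nonneg ?_
  rintro _ ⟨k, -, A, B, -, -, -, rfl⟩
  exact abs_nonneg _

lemma phiSum_nonneg (μ : Measure Ω) (X : ℕ → Ω → ℝ) : 0 ≤ phiSum μ X :=
  tsum_nonneg fun _ => Real.sqrt_nonneg _

lemma abs_ite_abs_le_le {b : ℝ} (hb : 0 ≤ b) (y : ℝ) : |if |y| ≤ b then y else 0| ≤ b := by
  split_ifs with h
  · exact h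
  · simpa using hb

lemma measurable_ite_abs_le (b : ℝ) : Measurable fun y : ℝ => if |y| ≤ b then y else 0 :=
  measurable_id.ite (measurableSet_le measurable_abs measurable_const) measurable_const

lemma sq_ite_abs_le_le {b α : ℝ} (hb : 0 ≤ b) (hα : α ≤ 1) (y : ℝ) :
    (if |y| ≤ b then y else 0) ^ 2 ≤ b ^ (1 - α) * |y| ^ (1 + α) := by
  split_ifs with h
  · rcases eq_or_ne y 0 with rfl | hy
    · rw [zero_pow two_ne_zero]
      positivity
    · calc y ^ 2 = |y| ^ (1 - α) * |y| ^ (1 + α) := by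
            rw [← Real.rpow_add (abs_pos.2 hy), ← sq_abs]
            norm_num
        _ ≤ b ^ (1 - α) * |y| ^ (1 + α) := by gcongr
  · rw [zero_pow two_ne_zero]
    positivity

variable [IsProbabilityMeasure μ]

lemma abs_div_measureReal_sub_le_phiCoef {k m : ℕ} (hk : 1 ≤ k) {A B : Set Ω}
    (hA : MeasurableSet[sigmaGen X (Set.Icc 1 k)] A)
    (hB : MeasurableSet[sigmaGen X (Set.Ici (k + m))] B) (hA₀ : 0 < μ A) :
    |μ.real (B ∩ A) / μ.real A - μ.real B| ≤ phiCoef μ X m := by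
  refine le_csSup ⟨1, ?_⟩ ⟨k, hk, A, B, hA, hB, hA₀, rfl⟩
  rintro _ ⟨-, -, A', B', -, -, -, rfl⟩
  have hcond : μ.real (B' ∩ A') / μ.real A' ≤ 1 :=
    div_le_one_of_le₀ (measureReal_mono Set.inter_subset_right) measureReal_nonneg
  exact abs_sub_le_of_nonneg_of_le (by positivity) hcond measureReal_nonneg measureReal_le_one

lemma isPhiMixing_phiCoef {k m : ℕ} (hk : 1 ≤ k) :
    IsPhiMixing μ (sigmaGen X (Set.Icc 1 k)) (sigmaGen X (Set.Ici (k + m))) (phiCoef μ X m) := by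
  intro A B hA hB
  rcases eq_or_ne (μ.real A) 0 with hA₀ | hA₀
  · have hAB : μ.real (A ∩ B) = 0 := measureReal_mono_null Set.inter_subset_left hA₀
    simp [hA₀, hAB]
  · have hpos : 0 < μ.real A := measureReal_nonneg.lt_of_ne' hA₀
    calc |μ.real (A ∩ B) - μ.real A * μ.real B|
        = |μ.real (B ∩ A) / μ.real A - μ.real B| * μ.real A := by
          rw [← abs_of_pos hpos, ← abs_mul, abs_of_pos hpos, sub_mul, div_mul_cancel₀ _ hA₀,
            Set.inter_comm, mul_comm (μ.real A)]
      _ ≤ phiCoef μ X m * μ.real A := by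
          gcongr
          exact abs_div_measureReal_sub_le_phiCoef hk hA hB
            (ENNReal.toReal_pos_iff.1 hpos).1

lemma memLp_ite_abs_le {b : ℝ} (hb : 0 ≤ b) {f : Ω → ℝ} (hf : Measurable f) :
    MemLp (fun ω => if |f ω| ≤ b then f ω else 0) 2 μ :=
  .of_bound ((measurable_ite_abs_le b).comp hf).aestronglyMeasurable b
    (.of_forall fun ω => abs_ite_abs_le_le hb (f ω))

lemma abs_mainPart_le {b : ℝ} (hb : 0 ≤ b) (k : ℕ) (ω : Ω) : |mainPart μ X b k ω| ≤ 2 * b := by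
  rw [mainPart, two_mul]
  have hmean := norm_integral_le_of_norm_le_const (μ := μ) (C := b)
    (f := fun ω => if |X k ω| ≤ b then X k ω else 0)
    (.of_forall fun ω => abs_ite_abs_le_le hb (X k ω))
  exact (abs_sub _ _).trans (add_le_add (abs_ite_abs_le_le hb _) (by simpa using hmean))

lemma integral_mainPart_sq_le {b α : ℝ} (hb : 0 ≤ b) (hα : α ≤ 1) {k : ℕ}
    (hX : Measurable (X k)) (hint : Integrable (fun ω => |X k ω| ^ (1 + α)) μ) :
    ∫ ω, mainPart μ X b k ω ^ 2 ∂μ ≤ b ^ (1 - α) * ∫ ω, |X k ω| ^ (1 + α) ∂μ := by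
  have hf := memLp_ite_abs_le (μ := μ) hb hX
  calc ∫ ω, mainPart μ X b k ω ^ 2 ∂μ
      = Var[fun ω => if |X k ω| ≤ b then X k ω else 0; μ] :=
        (variance_eq_integral hf.aemeasurable).symm
    _ ≤ ∫ ω, (if |X k ω| ≤ b then X k ω else 0) ^ 2 ∂μ :=
        variance_le_expectation_sq hf.aestronglyMeasurable
    _ ≤ ∫ ω, b ^ (1 - α) * |X k ω| ^ (1 + α) ∂μ :=
        integral_mono hf.integrable_sq (hint.const_mul _) fun ω => sq_ite_abs_le_le hb hα (X k ω)
    _ = b ^ (1 - α) * ∫ ω, |X k ω| ^ (1 + α) ∂μ := integral_const_mul _ _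

lemma isCenteredMixing_mainPart (hX : ∀ n, Measurable (X n)) {b : ℝ} (hb : 0 ≤ b) :
    IsCenteredMixing μ (fun i => mainPart μ X b (i + 1)) fun m => phiCoef μ X (m + 1) where
  measurable i := ((measurable_ite_abs_le b).comp (hX _)).sub_const _
  memLp i := (memLp_ite_abs_le hb (hX _)).sub (memLp_const _)
  integral_eq_zero i := by
    simp only [mainPart]
    rw [integral_sub ((memLp_ite_abs_le hb (hX _)).integrable one_le_two) (integrable_const _)]
    simp
  isPhiMixing k m := by
    have hmeas {S : Set ℕ} {i : ℕ} (hi : i + 1 ∈ S) :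
        Measurable[sigmaGen X S] (mainPart μ X b (i + 1)) :=
      ((measurable_ite_abs_le b).comp (measurable_sigmaGen hi)).sub_const _
    rcases k with _ | k
    · exact (isPhiMixing_bot_left (phiCoef_nonneg μ X _)).mono (sigmaGen_le (by simp)) le_rfl
    · exact (isPhiMixing_phiCoef (Nat.le_add_left 1 k)).mono
        (sigmaGen_le fun i hi => hmeas ⟨Nat.le_add_left 1 i, hi⟩)
        (sigmaGen_le fun i hi => hmeas (by grind))

end MainPart

section MainPartDeviation

lemma exists_tilt {α r β lam c V a₁ p n : ℝ} (hα : 0 < 1 + α) (hr : 0 < 1 + r)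
    (hβ : β = (α * r + 1) / ((1 + α) * (1 + r)))
    (hlam : lam = (r - 1) / ((1 + r) * (1 + α))) (hV : 0 < V) (ha₁ : 0 < a₁)
    (hsq : a₁ ^ 2 = 3 * c * V) (hp : 0 < p) (hn : 0 < n) :
    ∃ t > 0, t * (n * (a₁ * (p / n) ^ β)) = 3 / 2 * (c * p) ∧
      t ^ 2 * (((n / p) ^ lam) ^ (1 - α) * V) = 3 / 4 * (c * p) / n ∧
      t * (2 * (n / p) ^ lam) = a₁ / V * p ^ (1 / (1 + r)) * n ^ (-(1 / (1 + r))) := by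
  obtain ⟨q, hq, rfl⟩ : ∃ q > 0, n = p * q := ⟨n / p, by positivity, by field_simp⟩
  have hpn : p / (p * q) = q⁻¹ := by field_simp
  rw [hpn, mul_div_cancel_left₀ q hp.ne', Real.inv_rpow hq.le, ← Real.rpow_neg hq.le]
  have hz : (q ^ (-β)) ^ 2 * q = (q ^ lam) ^ (1 - α) := by
    rw [← Real.rpow_mul_natCast hq.le, ← Real.rpow_add_one hq.ne', ← Real.rpow_mul hq.le, hβ,
      hlam]
    congr 1
    push_cast
    field_simp
    ring
  have hyb : q ^ (-β) * q ^ lam = (q ^ lam) ^ (1 - α) * q ^ (-(1 / (1 + r))) := by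
    rw [← Real.rpow_add hq, ← Real.rpow_mul hq.le, ← Real.rpow_add hq, hβ, hlam]
    congr 1
    field_simp
    ring
  refine ⟨a₁ * q ^ (-β) / (2 * (V * (q ^ lam) ^ (1 - α))), by positivity, ?_, ?_, ?_⟩
  · rw [← hz]
    field_simp
    rw [hsq]
    ring
  · rw [← hz]
    field_simp
    rw [hsq]
    ring
  · have hpq : p ^ (1 / (1 + r)) * (p * q) ^ (-(1 / (1 + r))) = q ^ (-(1 / (1 + r))) := by
      rw [Real.mul_rpow hp.le hq.le, ← mul_assoc, ← Real.rpow_add hp, add_neg_cancel,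
        Real.rpow_zero, one_mul]
    rw [mul_assoc (a₁ / V), hpq, mul_left_comm, div_mul_eq_mul_div, mul_assoc a₁, hyb]
    field_simp

variable {Ω : Type*} [MeasurableSpace Ω] {μ : Measure Ω} [IsProbabilityMeasure μ]
  {X : ℕ → Ω → ℝ}

lemma eventually_measureReal_le_mul_sum_mainPart_le {r α ν c p a₁ β lam ε : ℝ}
    (hX : ∀ n, Measurable (X n)) (hr : 0 < r)
    (hmix : (fun m => phiCoef μ X (m + 1)) =O[atTop] fun m => (m : ℝ) ^ (-r))
    (hsum : Summable fun m => √(phiCoef μ X (m + 1))) (hα : -1 < α) (hα₁ : α ≤ 1)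
    (hint : ∀ n, 1 ≤ n → Integrable (fun ω => |X n ω| ^ (1 + α)) μ)
    (hmom : ∀ n, 1 ≤ n → ∫ ω, |X n ω| ^ (1 + α) ∂μ ≤ ν) (hν : 0 < ν) (hc : 0 < c) (hp : 0 < p)
    (ha₁ : a₁ = √(3 * c * ν * (1 + 4 * phiSum μ X)))
    (hβ : β = (α * r + 1) / ((1 + α) * (1 + r)))
    (hlam : lam = (r - 1) / ((1 + r) * (1 + α))) (hε : |ε| = 1) :
    ∀ᶠ n : ℕ in atTop, μ.real {ω | (n : ℝ) * (a₁ * (p / n) ^ β) ≤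
      ε * ∑ k ∈ Icc 1 n, mainPart μ X ((n / p) ^ lam) k ω} ≤ Real.exp (-(c * p / 2)) := by
  have hΦ := phiSum_nonneg μ X
  have hV : 0 < ν * (1 + 4 * phiSum μ X) := by positivity
  have ha₁pos : 0 < a₁ := by rw [ha₁]; positivity
  have hsq : a₁ ^ 2 = 3 * c * (ν * (1 + 4 * phiSum μ X)) := by
    rw [ha₁, Real.sq_sqrt (by positivity)]
    ring
  have hexp : Real.exp (-(3 / 2 * (c * p)) + 5 / 4 * (3 / 4 * (c * p))) <
      Real.exp (-(c * p / 2)) := Real.exp_lt_exp.2 (by nlinarith [mul_pos hc hp])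
  filter_upwards [eventually_forall_measureReal_le_sum_range_lt (μ := μ)
    (K := a₁ / (ν * (1 + 4 * phiSum μ X)) * p ^ (1 / (1 + r))) hr hmix hsum hexp,
    eventually_gt_atTop 0] with n hdev hn
  have hn' : (0 : ℝ) < n := by exact_mod_cast hn
  obtain ⟨t, ht, hlevel, hvar, hbound⟩ :=
    exists_tilt (by linarith) (by linarith) hβ hlam hV ha₁pos hsq hp hn'
  have hb : (0 : ℝ) ≤ (n / p) ^ lam := by positivity
  have hsumIcc (ω : Ω) : ∑ i ∈ range n, ε * t * mainPart μ X ((n / p) ^ lam) (i + 1) ω =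
      t * (ε * ∑ k ∈ Icc 1 n, mainPart μ X ((n / p) ^ lam) k ω) := by
    rw [← mul_sum, mul_comm ε, mul_assoc, range_eq_Ico,
      sum_Ico_add' (fun k => mainPart μ X ((n / p) ^ lam) k ω) 0 n 1]
    rfl
  refine le_of_eq_of_le ?_ (hdev _ ((isCenteredMixing_mainPart hX hb).const_mul fun _ => ε * t)
    (fun i ω => ?_) fun i => ?_).le
  · simp only [hsumIcc, ← hlevel, mul_le_mul_iff_right₀ ht]
  · rw [← hbound, abs_mul, abs_mul, hε, one_mul, abs_of_pos ht]
    gcongr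
    exact abs_mainPart_le hb _ ω
  · have hi := Nat.le_add_left 1 i
    have hsq_eq : (ε * t) ^ 2 = t ^ 2 := by rw [mul_pow, ← sq_abs ε, hε, one_pow, one_mul]
    rw [← hvar, ← phiSum, le_div_iff₀ (by positivity)]
    simp only [mul_pow _ (mainPart _ _ _ _ _), hsq_eq, integral_const_mul]
    rw [mul_assoc, ← mul_assoc _ ν]
    gcongr
    exact (integral_mainPart_sq_le hb hα₁ (hX _) (hint _ hi)).trans
      (mul_le_mul_of_nonneg_left (hmom _ hi) (by positivity))

end MainPartDeviation

section Rate

variable {Ω : Type*} [MeasurableSpace Ω] {μ : Measure Ω} {X : ℕ → Ω → ℝ}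

lemma isBigO_phiCoef {r C : ℝ} (hr : 0 ≤ r)
    (hmix : ∀ m : ℕ, 1 ≤ m → phiCoef μ X m ≤ C * ((m : ℝ) + 1) ^ (-r)) :
    phiCoef μ X =O[atTop] fun m => (m : ℝ) ^ (-r) := by
  refine .of_bound |C| ?_
  filter_upwards [eventually_ge_atTop 1] with m hm
  have hm' : (0 : ℝ) < m := by exact_mod_cast hm
  rw [Real.norm_of_nonneg (phiCoef_nonneg μ X m), Real.norm_of_nonneg (by positivity)]
  calc phiCoef μ X m ≤ C * ((m : ℝ) + 1) ^ (-r) := hmix m hm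
    _ ≤ |C| * (m : ℝ) ^ (-r) := mul_le_mul (le_abs_self C)
        (Real.rpow_le_rpow_of_nonpos hm' (by linarith) (by linarith))
        (by positivity) (abs_nonneg C)

lemma isBigO_comp_succ {f : ℕ → ℝ} {r : ℝ} (hr : 0 ≤ r)
    (hf : f =O[atTop] fun m => (m : ℝ) ^ (-r)) :
    (fun m => f (m + 1)) =O[atTop] fun m => (m : ℝ) ^ (-r) := by
  refine (hf.comp_tendsto (tendsto_add_atTop_nat 1)).trans (.of_bound 1 ?_)
  filter_upwards [eventually_gt_atTop 0] with m hm
  have hm' : (0 : ℝ) < m := by exact_mod_cast hm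
  simp only [Function.comp_apply, one_mul]
  rw [Real.norm_of_nonneg (by positivity), Real.norm_of_nonneg (by positivity)]
  exact Real.rpow_le_rpow_of_nonpos hm' (by simp) (by linarith)

lemma summable_sqrt_phiCoef {r : ℝ} (hr : 2 < r)
    (hmix : phiCoef μ X =O[atTop] fun m => (m : ℝ) ^ (-r)) :
    Summable fun m => √(phiCoef μ X (m + 1)) := by
  have hsqrt : (fun m => √(phiCoef μ X m)) =O[atTop] fun m : ℕ => (m : ℝ) ^ (-(r / 2)) := by
    refine ((hmix.rpow (r := 1 / 2) (by norm_num) (.of_forall fun m => by positivity)).congr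
      (fun m => (Real.sqrt_eq_rpow _).symm) fun m => ?_)
    rw [← Real.rpow_mul m.cast_nonneg]
    ring_nf
  exact (summable_nat_add_iff 1).2
    (summable_of_isBigO_nat (Real.summable_nat_rpow.2 (by linarith)) hsqrt)

end Rate

lemma measureReal_le_abs_le {Ω : Type*} [MeasurableSpace Ω] {μ : Measure Ω} [IsFiniteMeasure μ]
    {f : Ω → ℝ} {x y : ℝ} (hupper : μ.real {ω | x ≤ f ω} ≤ y)
    (hlower : μ.real {ω | f ω ≤ -x} ≤ y) : μ.real {ω | x ≤ |f ω|} ≤ 2 * y := by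
  have hset : {ω | x ≤ |f ω|} = {ω | x ≤ f ω} ∪ {ω | f ω ≤ -x} := by
    ext ω
    simp only [Set.mem_union, Set.mem_ofPred_eq, le_abs, le_neg]
  rw [hset, two_mul]
  exact (measureReal_union_le _ _).trans (add_le_add hupper hlower)

theorem main_part_probability_bound_general
    {Ω : Type*} [MeasurableSpace Ω] (μ : Measure Ω) [IsProbabilityMeasure μ]
    (X : ℕ → Ω → ℝ) (hmeas : ∀ n, Measurable (X n)) (r : ℝ) (hr : 0 < r)
    (hmix : phiCoef μ X =O[atTop] fun m => (m : ℝ) ^ (-r))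
    (hsum : Summable fun m => √(phiCoef μ X (m + 1)))
    (α ν : ℝ) (hα : -1 < α) (hα₁ : α ≤ 1)
    (hint : ∀ n, 1 ≤ n → Integrable (fun ω => |X n ω| ^ (1 + α)) μ)
    (hmom : ∀ n, 1 ≤ n → ∫ ω, |X n ω| ^ (1 + α) ∂μ ≤ ν) (hν : 0 < ν)
    (c δ p a₁ β lam : ℝ) (hc : 0 < c) (hδ : δ ∈ Set.Ioo (0 : ℝ) 1)
    (hp : p = 2 * Real.log (1 / δ))
    (ha₁ : a₁ = √(3 * c * ν * (1 + 4 * phiSum μ X)))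
    (hβ : β = (α * r + 1) / ((1 + α) * (1 + r)))
    (hlam : lam = (r - 1) / ((1 + r) * (1 + α))) :
    ∀ᶠ n : ℕ in atTop,
      μ.real {ω | n * (a₁ * (p / n) ^ β) ≤
        ∑ k ∈ Icc 1 n, mainPart μ X ((n / p) ^ lam) k ω} ≤ δ ^ c ∧
      μ.real {ω | ∑ k ∈ Icc 1 n, mainPart μ X ((n / p) ^ lam) k ω ≤
        -(n * (a₁ * (p / n) ^ β))} ≤ δ ^ c ∧
      μ.real {ω | n * (a₁ * (p / n) ^ β) ≤
        |∑ k ∈ Icc 1 n, mainPart μ X ((n / p) ^ lam) k ω|} ≤ 2 * δ ^ c := by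
  have hp₀ : 0 < p := hp ▸ mul_pos two_pos (Real.log_pos ((one_lt_div hδ.1).2 hδ.2))
  have hδc : Real.exp (-(c * p / 2)) = δ ^ c := by
    rw [Real.rpow_def_of_pos hδ.1, hp, one_div, Real.log_inv]
    ring_nf
  have htail {ε : ℝ} (hε : |ε| = 1) := eventually_measureReal_le_mul_sum_mainPart_le hmeas hr
    (isBigO_comp_succ hr.le hmix) hsum hα hα₁ hint hmom hν hc hp₀ ha₁ hβ hlam hε
  rw [hδc] at htail
  filter_upwards [htail abs_one, htail (ε := -1) (by simp)] with n hupper hlower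
  simp only [one_mul] at hupper
  simp only [neg_one_mul, le_neg (a := (n : ℝ) * _)] at hlower
  exact ⟨hupper, hlower, measureReal_le_abs_le hupper hlower⟩

/-- inequalities (17)-(18) in the proof of Theorem 1: for the main parts
`Y_k = X_k·1(|X_k| ≤ b_n) - E(X_k·1(|X_k| ≤ b_n))` with `b_n = (n/p)^λ`, and
`δ_n = a₁ (p/n)^β`, there is `n₀` such that for `n ≥ n₀`,
`P(∑ Y_k ≥ nδ_n) ≤ Aδ^c`, `P(∑ Y_k ≤ -nδ_n) ≤ Aδ^c`, hence `P(|∑ Y_k| ≥ nδ_n) ≤ 2Aδ^c`. -/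
theorem main_part_probability_bound
    {Ω : Type*} [MeasurableSpace Ω] (μ : Measure Ω) [IsProbabilityMeasure μ]
    (X : ℕ → Ω → ℝ) (hmeas : ∀ n, Measurable (X n))
    (r C : ℝ) (hr : 2 < r) (hC : 0 < C)
    (hmix : ∀ m : ℕ, 1 ≤ m → phiCoef μ X m ≤ C * ((m : ℝ) + 1) ^ (-r))
    (α να : ℝ) (hα0 : 0 < α) (hα1 : α < 1)
    (hint : ∀ n : ℕ, 1 ≤ n → Integrable (fun ω => |X n ω| ^ (1 + α)) μ)
    (hbdd : BddAbove (Set.range fun n : ℕ => ∫ ω, |X (n + 1) ω| ^ (1 + α) ∂μ))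
    (hνα : να = ⨆ n : ℕ, ∫ ω, |X (n + 1) ω| ^ (1 + α) ∂μ) (hνpos : 0 < να)
    (c δ p φ a₁ β lam A : ℝ)
    (hc : 0 < c) (hδ : δ ∈ Set.Ioo (0:ℝ) 1)
    (hp : p = 2 * Real.log (1/δ))
    (hφ : φ = phiSum μ X)
    (ha₁ : a₁ = Real.sqrt (3 * c * να * (1 + 4 * φ)))
    (hβ : β = (α * r + 1) / ((1 + α) * (1 + r)))
    (hlam : lam = (r - 1) / ((1 + r) * (1 + α)))
    (hA : A = Real.exp (1/4 + Real.sqrt (Real.exp 1) * C * 4 ^ r)) :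
    ∃ n₀ : ℕ, 0 < n₀ ∧ ∀ n : ℕ, n₀ ≤ n →
      (μ {ω | (n:ℝ) * (a₁ * (p / n) ^ β) ≤
          ∑ k ∈ Finset.Icc 1 n, mainPart μ X (((n:ℝ) / p) ^ lam) k ω}).toReal ≤ A * δ ^ c ∧
      (μ {ω | ∑ k ∈ Finset.Icc 1 n, mainPart μ X (((n:ℝ) / p) ^ lam) k ω ≤
          -((n:ℝ) * (a₁ * (p / n) ^ β))}).toReal ≤ A * δ ^ c ∧
      (μ {ω | (n:ℝ) * (a₁ * (p / n) ^ β) ≤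
          |∑ k ∈ Finset.Icc 1 n, mainPart μ X (((n:ℝ) / p) ^ lam) k ω|}).toReal ≤
        2 * A * δ ^ c := by
  have hmix' := isBigO_phiCoef (by linarith) hmix
  have hmom (n : ℕ) (hn : 1 ≤ n) : ∫ ω, |X n ω| ^ (1 + α) ∂μ ≤ να := by
    obtain ⟨m, rfl⟩ := Nat.exists_eq_add_of_le' hn
    exact hνα ▸ le_ciSup hbdd m
  have hA₁ : 1 ≤ A := hA ▸ Real.one_le_exp (by positivity)
  have hδA : δ ^ c ≤ A * δ ^ c := le_mul_of_one_le_left (Real.rpow_nonneg hδ.1.le c) hA₁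
  obtain ⟨n₀, hn₀⟩ := eventually_atTop.1 <| main_part_probability_bound_general μ X hmeas r
    (by linarith) hmix' (summable_sqrt_phiCoef hr hmix') α να (by linarith) hα1.le hint hmom hνpos
    c δ p a₁ β lam hc hδ hp (hφ ▸ ha₁) hβ hlam
  refine ⟨n₀ + 1, n₀.succ_pos, fun n hn => ?_⟩
  obtain ⟨hupper, hlower, habs⟩ := hn₀ n (by omega)
  exact ⟨hupper.trans hδA, hlower.trans hδA, habs.trans (by linarith)⟩
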